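/- arXiv:2111.01759 — 2 statements merged into one kernel-verified Lean document; each statement's English description precedes it below -/
import Mathlib

section
/- For all positive integers t and ℓ: 2^{tℓ} ≤ Σ_{(k¹,…,k^t) ∈ (ℕ^ℓ)^t} ∏_{i=1}^ℓ 2^{−K_i} ≤ t!·2^{t(ℓ+1)}, where for each tuple (k¹,…,k^t) the quantity K_i denotes the number of distinct level-i indices in P^{k¹} ∪ ⋯ ∪ P^{k^t}. -/
open MeasureTheory
open scoped Classical ENNReal

noncomputable section

namespace EDW

/-- The star-extended domain `[m] ∪ {⋆₀, ⋆₁, …}`: `Sum.inl x` is a base element of `[m]`,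
`Sum.inr t` is the star `⋆_t`. -/
abbrev Dom (m : ℕ) : Type := Sum (Fin m) ℕ

/-- A position (node) of the extended walk: its vertex together with, for every level `i`,
the value `a_i(μ)` that was computed at this position (if assigned). -/
structure Node (m n : ℕ) : Type where
  vtx : Fin n
  tag : ℕ → Option (Dom m)

theorem freshStar_exists {m : ℕ} (C : Finset (Dom m)) :
    ∃ t : ℕ, (Sum.inr t : Dom m) ∉ C := by
  by_contra hc
  push_neg at hc
  have hinj : Function.Injective (fun t : ℕ => (Sum.inr t : Dom m)) := by
    intro a b h
    simpa using h
  have hsub : Set.range (fun t : ℕ => (Sum.inr t : Dom m)) ⊆ ↑C := by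
    rintro x ⟨t, rfl⟩
    exact hc t
  exact Set.infinite_range_of_injective hinj (C.finite_toSet.subset hsub)

/-- The least `t` with `⋆_t ∉ C`. -/
def freshStar {m : ℕ} (C : Finset (Dom m)) : ℕ := Nat.find (freshStar_exists C)

variable {m n : ℕ}

/-- One level of the extended-walk loop; `fuel` bounds the number of remaining loop
iterations, and `sub s'` is the level-`(i-1)` walk started at `s'`. -/
def loopF (a : Fin n → Fin m) (g : ℕ → Dom m → Bool) (r : ℕ → Dom m → Fin n)
    (sub : Fin n → Option (List (Node m n))) (i : ℕ) :
    ℕ → Finset (Dom m) → Bool → Fin n → List (Node m n) → Option (List (Node m n))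
  | 0, _, _, _, _ => none
  | fuel + 1, C, star, sj, acc =>
    match sub sj with
    | none => none
    | some subw =>
      match subw.getLast? with
      | none => none
      | some xnode =>
        let useBase : Prop := star = false ∧ (Sum.inl (a xnode.vtx) : Dom m) ∉ C
        let y : Dom m := if useBase then Sum.inl (a xnode.vtx) else Sum.inr (freshStar C)
        let star' : Bool := if useBase then false else true
        let xnode' : Node m n := ⟨xnode.vtx, fun t => if t = i then some y else xnode.tag t⟩
        let acc' := acc ++ subw.dropLast ++ [xnode']
        if g i y then loopF a g r sub i fuel (insert y C) star' (r i y) acc' else some acc'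

/-- `walkF fuel i s'` computes the extended walk `walk(s', i)`; it returns `none` if the
fuel is insufficient (the true walk is obtained by letting the fuel go to infinity). -/
def walkF (a : Fin n → Fin m) (g : ℕ → Dom m → Bool) (r : ℕ → Dom m → Fin n) :
    ℕ → ℕ → Fin n → Option (List (Node m n))
  | _, 0, s' => some [⟨s', fun _ => none⟩]
  | 0, _ + 1, _ => none
  | fuel + 1, i + 1, s' =>
    loopF a g r (fun sj => walkF a g r fuel i sj) (i + 1) (fuel + 1) ∅ false s' []

/-- The extended walk `walk(s, ℓ)`: `some w` iff the walk terminates, with output `w`. -/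
def extWalk (a : Fin n → Fin m) (g : ℕ → Dom m → Bool) (r : ℕ → Dom m → Fin n)
    (ℓ : ℕ) (s : Fin n) : Option (List (Node m n)) :=
  if h : ∃ fuel, (walkF a g r fuel ℓ s).isSome = true then walkF a g r (Nat.find h) ℓ s
  else none

/-! ### The relaxed extended walk -/

/-- Storage for the recorded sets `C^{i,k¹}`. -/
abbrev Store (m : ℕ) : Type := ℕ → Option (Finset (Dom m))

/-- One level of the relaxed extended-walk loop. `subR k' st s'` is the relaxed recursive
call at level `i - 1` with index parameter `k'` and store `st`; `subU s'` is the last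
vertex of the un-relaxed walk `walk(s', i-1)`.  The extra loop state is: `j`, the number
of level-`i` nodes produced so far; `Crec = C_{min(j, k¹_i)}`; and the store `st`. -/
def rloopF (a : Fin n → Fin m) (g : ℕ → Dom m → Bool) (r : ℕ → Dom m → Fin n)
    (ℓ : ℕ) (k1 k2 : ℕ → ℕ)
    (subR : (ℕ → ℕ) → Store m → Fin n → Option (List (Node m n) × Store m))
    (subU : Fin n → Option (Fin n)) (i : ℕ) (kctx : ℕ → ℕ) :
    ℕ → Finset (Dom m) → Bool → Fin n → List (Node m n) → ℕ → Finset (Dom m) → Store m →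
      Option (List (Node m n) × Store m)
  | 0, _, _, _, _, _, _, _ => none
  | fuel + 1, C, star, sj, acc, j, Crec, st =>
    match subR (fun t => if t = i then j else if i < t then kctx t else 0) st sj with
    | none => none
    | some (subw, st₁) =>
      match subU sj, subw.getLast? with
      | some xv, some lastnd =>
        let useBase : Prop := star = false ∧ (Sum.inl (a xv) : Dom m) ∉ C
        let y : Dom m := if useBase then Sum.inl (a xv) else Sum.inr (freshStar C)
        let star' : Bool := if useBase then false else true
        let lastnd' : Node m n := ⟨lastnd.vtx, fun t => if t = i then some y else lastnd.tag t⟩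
        let acc' := acc ++ subw.dropLast ++ [lastnd']
        if g i y then
          rloopF a g r ℓ k1 k2 subR subU i kctx fuel (insert y C) star' (r i y) acc' (j + 1)
            (if j + 1 ≤ k1 i then insert y C else Crec) st₁
        else
          some (acc',
            if (∀ t, i < t → t ≤ ℓ → kctx t = k1 t) ∧ (∃ t, i < t ∧ t ≤ ℓ ∧ k1 t < k2 t) then
              fun t => if t = i then some Crec else st₁ t
            else st₁)
      | _, _ => none

/-- The relaxed extended walk `walk^{k¹,k²}(s', i, kctx)`, with fuel. -/
def rwalkF (a : Fin n → Fin m) (g : ℕ → Dom m → Bool) (r : ℕ → Dom m → Fin n)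
    (ℓ : ℕ) (k1 k2 : ℕ → ℕ) :
    ℕ → ℕ → (ℕ → ℕ) → Store m → Fin n → Option (List (Node m n) × Store m)
  | _, 0, _, st, s' => some ([⟨s', fun _ => none⟩], st)
  | 0, _ + 1, _, _, _ => none
  | fuel + 1, i + 1, kctx, st, s' =>
    let C₀ : Finset (Dom m) :=
      if (∀ t, i + 1 < t → t ≤ ℓ → kctx t = k2 t) ∧ (∃ t, i + 1 < t ∧ t ≤ ℓ ∧ k1 t < k2 t) ∧
          0 < k2 (i + 1) then (st (i + 1)).getD ∅
      else ∅
    rloopF a g r ℓ k1 k2 (fun k' st' sj => rwalkF a g r ℓ k1 k2 fuel i k' st' sj)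
      (fun sj => ((walkF a g r fuel i sj).bind List.getLast?).map Node.vtx)
      (i + 1) kctx (fuel + 1) C₀ false s' [] 0 C₀ st

/-- The relaxed extended walk `w^{k¹,k²} = walk^{k¹,k²}(s, ℓ, (0,…,0))`:
`some w` iff it terminates, with output `w`. -/
def extRWalk (a : Fin n → Fin m) (g : ℕ → Dom m → Bool) (r : ℕ → Dom m → Fin n)
    (ℓ : ℕ) (k1 k2 : ℕ → ℕ) (s : Fin n) : Option (List (Node m n)) :=
  if h : ∃ fuel, (rwalkF a g r ℓ k1 k2 fuel ℓ (fun _ => 0) (fun _ => none) s).isSome = true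
  then (rwalkF a g r ℓ k1 k2 (Nat.find h) ℓ (fun _ => 0) (fun _ => none) s).map Prod.fst
  else none

/-! ### Positions, levels and the dependency tree -/

/-- The vertex `w_μ` (positions are 1-indexed; `μ = 0` is the root, which has no vertex). -/
def vtxAt (w : List (Node m n)) (μ : ℕ) : Option (Fin n) :=
  if μ = 0 then none else (w[μ - 1]?).map Node.vtx

/-- The value `a_i(μ)`. -/
def tagAt (w : List (Node m n)) (μ i : ℕ) : Option (Dom m) :=
  if μ = 0 then none else (w[μ - 1]?).bind fun nd => nd.tag i

/-- `level(μ)`: the least `i ∈ [1, ℓ]` with `g_i(a_i(μ)) = 1`, and `ℓ + 1` if there is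
none (in particular for the root `0` and for the final position of the walk). -/
def levelOf (ℓ : ℕ) (g : ℕ → Dom m → Bool) (w : List (Node m n)) (μ : ℕ) : ℕ :=
  if h : ∃ i, (1 ≤ i ∧ i ≤ ℓ) ∧ ∃ y, tagAt w μ i = some y ∧ g i y = true then Nat.find h
  else ℓ + 1

/-- `a(μ) = a_{level(μ)}(μ)`. -/
def aAt (ℓ : ℕ) (g : ℕ → Dom m → Bool) (w : List (Node m n)) (μ : ℕ) : Option (Dom m) :=
  tagAt w μ (levelOf ℓ g w μ)

/-- `next(μ) = w_{μ+1}`. -/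
def nextAt (w : List (Node m n)) (μ : ℕ) : Option (Fin n) := vtxAt w (μ + 1)

/-- `ν` lies on the root-to-`μ` path of the dependency tree with level function `lvl`. -/
def OnPath (lvl : ℕ → ℕ) (ν μ : ℕ) : Prop :=
  ν ≤ μ ∧ ∀ ρ, ν < ρ → ρ ≤ μ → lvl ρ ≤ lvl ν

/-- The number of level-`i` nodes on the root-to-`μ` path. -/
def idxAt (lvl : ℕ → ℕ) (μ i : ℕ) : ℕ :=
  ((Finset.range (μ + 1)).filter fun ν => OnPath lvl ν μ ∧ lvl ν = i).card

/-- Node `μ` of the dependency tree (of a walk of length `wlen`) has index `k`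
(only the components `k_i` with `1 ≤ i ≤ ℓ` are relevant). -/
def HasIdx (ℓ : ℕ) (lvl : ℕ → ℕ) (wlen μ : ℕ) (k : ℕ → ℕ) : Prop :=
  μ ≤ wlen ∧ ∀ i, 1 ≤ i → i ≤ ℓ → idxAt lvl μ i = k i

/-- There is a collision between the root-to-`μ₁` path and the root-to-`μ₂` path. -/
def Collision (lvl : ℕ → ℕ) (av : ℕ → Option (Dom m)) (μ₁ μ₂ : ℕ) : Prop :=
  ∃ α β, OnPath lvl α μ₁ ∧ ¬ OnPath lvl α μ₂ ∧ OnPath lvl β μ₂ ∧ ¬ OnPath lvl β μ₁ ∧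
    lvl α = lvl β ∧ av α = av β

/-! ### The pseudorandom hash function and reachability -/

/-- The pseudorandom hash function of the family `H_{ℓ,m,n}` built from `g, r`
(`none` plays the role of `⋆`). -/
def hashOf (ℓ : ℕ) (g : ℕ → Dom m → Bool) (r : ℕ → Dom m → Fin n) (x : Fin m) :
    Option (Fin n) :=
  if h : ∃ i, (1 ≤ i ∧ i ≤ ℓ) ∧ g i (Sum.inl x) = true then some (r (Nat.find h) (Sum.inl x))
  else none

/-- `v ∈ f*_{a,h}(s)`: `v` is reachable from `s` in the digraph `G_{a,h}`. -/
def Reaches (a : Fin n → Fin m) (hsh : Fin m → Option (Fin n)) (s v : Fin n) : Prop :=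
  Relation.ReflTransGen (fun x y => hsh (a x) = some y) s v

/-- The second frequency moment `F₂(a)`. -/
def F2 (a : Fin n → Fin m) : ℕ :=
  ∑ i : Fin n, ∑ j : Fin n, if a i = a j then 1 else 0

/-! ### Index-vector combinatorics -/

/-- Equality of index vectors (only components `1..ℓ` matter). -/
def IdxEq (ℓ : ℕ) (k k' : ℕ → ℕ) : Prop := ∀ t, 1 ≤ t → t ≤ ℓ → k t = k' t

/-- The ordering `k < k'` on index vectors. -/
def IdxLt (ℓ : ℕ) (k k' : ℕ → ℕ) : Prop :=
  ∃ i, 1 ≤ i ∧ i ≤ ℓ ∧ k i < k' i ∧ ∀ t, i < t → t ≤ ℓ → k t = k' t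

/-- `k'` is an ancestor (index) of `k`. -/
def IsAncestorIdx (ℓ : ℕ) (k' k : ℕ → ℕ) : Prop :=
  ¬ IdxEq ℓ k' k ∧ ∃ i, 1 ≤ i ∧ i ≤ ℓ ∧ (∀ t, i < t → t ≤ ℓ → k' t = k t) ∧
    0 < k' i ∧ k' i ≤ k i ∧ ∀ t, 1 ≤ t → t < i → k' t = 0

/-- `k' ∈ P^k`: `k'` is `k` itself or an ancestor of `k`. -/
def InP (ℓ : ℕ) (k' k : ℕ → ℕ) : Prop := IdxEq ℓ k' k ∨ IsAncestorIdx ℓ k' k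

/-- `k'` is a level-`i` index. -/
def IsLevelIdx (ℓ i : ℕ) (k' : ℕ → ℕ) : Prop := 0 < k' i ∧ ∀ t, 1 ≤ t → t < i → k' t = 0

/-- A canonical index vector: zero outside `[1, ℓ]`. -/
def Canon (ℓ : ℕ) (k' : ℕ → ℕ) : Prop := ∀ t, t = 0 ∨ ℓ < t → k' t = 0

/-- `K_i`: the number of distinct level-`i` indices in `⋃_{k ∈ ks} P^k`. -/
def Kcount (ℓ : ℕ) (ks : List (ℕ → ℕ)) (i : ℕ) : ℕ :=
  Set.ncard {k' : ℕ → ℕ | Canon ℓ k' ∧ IsLevelIdx ℓ i k' ∧ ∃ k ∈ ks, InP ℓ k' k}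

/-- The rank (`1`-based) of the level-`i` index `κ` among the level-`i` indices of
`⋃_{k ∈ ks} P^k`, in increasing `<`-order. -/
def rankOf (ℓ : ℕ) (ks : List (ℕ → ℕ)) (i : ℕ) (κ : ℕ → ℕ) : ℕ :=
  Set.ncard {κ' : ℕ → ℕ |
    Canon ℓ κ' ∧ IsLevelIdx ℓ i κ' ∧ (∃ k ∈ ks, InP ℓ κ' k) ∧ IdxLt ℓ κ' κ} + 1

/-- Interpret a vector `k ∈ ℕ^ℓ` as a (canonical) index vector on levels `1..ℓ`. -/
def toIdx (ℓ : ℕ) (k : Fin ℓ → ℕ) : ℕ → ℕ :=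
  fun t => if h : 1 ≤ t ∧ t ≤ ℓ then k ⟨t - 1, by omega⟩ else 0

/-- The truncation `k^{i,j} = (0, …, 0, j, k_{i+1}, …, k_ℓ)`, indexing `μ^k_{i,j}`. -/
def truncIdx (k : ℕ → ℕ) (i j : ℕ) : ℕ → ℕ :=
  fun t => if t = i then j else if i < t then k t else 0

/-! ### The probability space -/

/-- The sample space: the functions `g_i`, `r_i` (on the star-extended domain) together
with the starting vertex `s`. -/
abbrev Sample (m n : ℕ) : Type := (ℕ → Dom m → Bool) × (ℕ → Dom m → Fin n) × Fin n

def gOf (ω : Sample m n) : ℕ → Dom m → Bool := ω.1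

def rOf (ω : Sample m n) : ℕ → Dom m → Fin n := ω.2.1

def sOf (ω : Sample m n) : Fin n := ω.2.2

/-- `P` is an admissible joint distribution of `(g, r, s)`: the starting vertex `s` is
uniform on `[n]`; each `g_i` (resp. `r_i`) is `τ`-wise independent and uniform on the
base domain, with fully independent uniform values on the stars; and all of
`g_1, …, g_ℓ, r_1, …, r_ℓ, s` are mutually independent.  This is expressed by requiring
that every admissible cylinder event has the correct product probability. -/
def GoodMeasure (ℓ τ : ℕ) (P : Measure (Sample m n)) : Prop :=
  ∀ (S T : Finset (ℕ × Dom m)) (vg : ℕ × Dom m → Bool) (vr : ℕ × Dom m → Fin n)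
    (s₀ : Fin n),
    (∀ q ∈ S, 1 ≤ q.1 ∧ q.1 ≤ ℓ) → (∀ q ∈ T, 1 ≤ q.1 ∧ q.1 ≤ ℓ) →
    (∀ i, (S.filter fun q => q.1 = i ∧ q.2.isLeft = true).card ≤ τ) →
    (∀ i, (T.filter fun q => q.1 = i ∧ q.2.isLeft = true).card ≤ τ) →
    P {ω : Sample m n |
        (∀ q ∈ S, gOf ω q.1 q.2 = vg q) ∧ (∀ q ∈ T, rOf ω q.1 q.2 = vr q) ∧ sOf ω = s₀} =
      (2 : ℝ≥0∞)⁻¹ ^ S.card * ((n : ℝ≥0∞))⁻¹ ^ T.card * (n : ℝ≥0∞)⁻¹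

/-! ### Events for the dependency tree -/

/-- The node indexed by `κ` exists in the dependency tree of the extended walk and its
`next`-value is `v`. -/
def NodeP (a : Fin n → Fin m) (ℓ : ℕ) (κ : ℕ → ℕ) (v : Fin n) (ω : Sample m n) : Prop :=
  ∃ w, extWalk a (gOf ω) (rOf ω) ℓ (sOf ω) = some w ∧
    ∃ μ, HasIdx ℓ (levelOf ℓ (gOf ω) w) w.length μ κ ∧ nextAt w μ = some v

/-- The event `F^{k,b}_{I,J}` (for the extended walk). -/
def Fev (a : Fin n → Fin m) (ℓ : ℕ) (k : ℕ → ℕ) (b : ℕ → ℕ → Fin n) (I J : ℕ)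
    (ω : Sample m n) : Prop :=
  (∀ i j, I < i → i ≤ ℓ → 1 ≤ j → j ≤ k i → NodeP a ℓ (truncIdx k i j) (b i j) ω) ∧
  ∀ j, 1 ≤ j → j ≤ J → NodeP a ℓ (truncIdx k I j) (b I j) ω

/-- The event fixing `g_1, …, g_{i-1}` and `r_1, …, r_{i-1}`. -/
def FixEv (i : ℕ) (gf : ℕ → Dom m → Bool) (rf : ℕ → Dom m → Fin n) : Set (Sample m n) :=
  {ω | ∀ t, 1 ≤ t → t < i → gOf ω t = gf t ∧ rOf ω t = rf t}

/-- The node indexed by `κ` exists in the dependency tree of the relaxed extended walk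
`w^{k¹,k²}` and its `next`-value is `v`. -/
def RNodeP (a : Fin n → Fin m) (ℓ : ℕ) (k1 k2 κ : ℕ → ℕ) (v : Fin n) (ω : Sample m n) :
    Prop :=
  ∃ w, extRWalk a (gOf ω) (rOf ω) ℓ k1 k2 (sOf ω) = some w ∧
    ∃ μ, HasIdx ℓ (levelOf ℓ (gOf ω) w) w.length μ κ ∧ nextAt w μ = some v

/-- The event `F^{K,b}_{I,J}` for `K = {k¹, k²}` (for the relaxed extended walk):
for every level `i ∈ [1, ℓ]` and every level-`i` index `κ` of `P^{k¹} ∪ P^{k²}` of rank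
`j`, if `i > I`, or `i = I` and `j ≤ J`, then `μ^K_{i,j}` exists and `next(μ^K_{i,j}) = b_{i,j}`. -/
def FevK (a : Fin n → Fin m) (ℓ : ℕ) (k1 k2 : ℕ → ℕ) (b : ℕ → ℕ → Fin n) (I J : ℕ)
    (ω : Sample m n) : Prop :=
  ∀ i κ, 1 ≤ i → i ≤ ℓ → Canon ℓ κ → IsLevelIdx ℓ i κ → (InP ℓ κ k1 ∨ InP ℓ κ k2) →
    (I < i ∨ (i = I ∧ rankOf ℓ [k1, k2] i κ ≤ J)) →
    RNodeP a ℓ k1 k2 κ (b i (rankOf ℓ [k1, k2] i κ)) ω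


/-!
Replace the ratio `2⁻¹` of the weight `∏ 2 ^ (-K_i)` by an arbitrary `r ≤ 1`, and write
`q = (1 - r)⁻¹`. For a single vector `k` one has `K_i = k_i`, so the sum over `k` is
`(∑ₓ r ^ x) ^ ℓ = q ^ ℓ`; the lower bound follows because a union has at most as many elements as
its parts together.

For the upper bound, sort the `t` vectors colexicographically, which costs a factor `t!`. All
elements of `P^a` are `≤ a`, so along a sorted tuple a vector `b` following `a` adds at least the
elements of `P^b` above `a`, and it suffices that `∑_{b ≥ a} r ^ #{x ∈ P^b | a < x} ≤ q ^ ℓ` for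
every `a`. If `i` is the topmost coordinate at which `b` exceeds `a`, then these elements include
those of the levels below `i` and `b_i - a_i` elements of level `i`. Hence the vectors `b` with a
given `i` contribute at most `r q · q ^ i` (with `i` counted from `0`), and `b = a` contributes `1`;
since `1 + r q = q`, the sum `1 + ∑_{i < ℓ} r q · q ^ i` telescopes to `q ^ ℓ`.
-/

section BigOperators

open Finset

theorem prod_Icc_one_eq_prod_fin {M : Type*} [CommMonoid M] (f : ℕ → M) (d : ℕ) :
    ∏ i ∈ Icc 1 d, f i = ∏ i : Fin d, f (i + 1) := by
  rw [Fin.prod_univ_eq_prod_range fun i => f (i + 1), range_eq_Ico, prod_Ico_add' f 0 d 1]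
  rfl

theorem tsum_pi_prod {d : ℕ} {α : Fin d → Type*} (f : ∀ i, α i → ℝ≥0∞) :
    ∑' k : ∀ i, α i, ∏ i, f i (k i) = ∏ i, ∑' x, f i x := by
  induction d with
  | zero => simp
  | succ d ih =>
    rw [← (Fin.consEquiv α).tsum_eq, ENNReal.tsum_prod']
    simp only [Fin.prod_univ_succ, Fin.consEquiv, Equiv.coe_fn_mk, Fin.cons_zero, Fin.cons_succ,
      ENNReal.tsum_mul_left, ih fun i => f i.succ, ENNReal.tsum_mul_right]

theorem tsum_prod_transition_le {α : Type*} {w : α → α → ℝ≥0∞} {C : ℝ≥0∞}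
    (hw : ∀ a, ∑' b, w a b ≤ C) (t : ℕ) (a : α) :
    ∑' ks : Fin t → α, ∏ j, w ((Fin.cons a ks : Fin (t + 1) → α) j.castSucc) (ks j) ≤ C ^ t := by
  induction t generalizing a with
  | zero => simp
  | succ t ih =>
    rw [← (Fin.consEquiv fun _ : Fin (t + 1) => α).tsum_eq, ENNReal.tsum_prod']
    simp only [Fin.prod_univ_succ, Fin.consEquiv, Equiv.coe_fn_mk, Fin.castSucc_zero,
      Fin.cons_zero, ← Fin.succ_castSucc, Fin.cons_succ, ENNReal.tsum_mul_left]
    calc ∑' b, w a b * ∑' ks : Fin t → α,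
          ∏ j, w ((Fin.cons b ks : Fin (t + 1) → α) j.castSucc) (ks j)
        ≤ ∑' b, w a b * C ^ t := ENNReal.tsum_le_tsum fun b => by gcongr; exact ih b
      _ = (∑' b, w a b) * C ^ t := ENNReal.tsum_mul_right
      _ ≤ C ^ (t + 1) := by rw [pow_succ']; gcongr; exact hw a

theorem tsum_le_factorial_mul_tsum_of_monotone {α : Type*} [LinearOrder α] {t : ℕ}
    {f g : (Fin t → α) → ℝ≥0∞} (hf : ∀ ks (σ : Equiv.Perm (Fin t)), f (ks ∘ σ) = f ks)
    (hfg : ∀ ks, Monotone ks → f ks ≤ g ks) :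
    ∑' ks, f ks ≤ t.factorial * ∑' ks, g ks := by
  have le_sum_perm (ks : Fin t → α) : f ks ≤ ∑ σ : Equiv.Perm (Fin t), g (ks ∘ σ) :=
    calc f ks = f (ks ∘ Tuple.sort ks) := (hf ks _).symm
      _ ≤ g (ks ∘ Tuple.sort ks) := hfg _ (Tuple.monotone_sort ks)
      _ ≤ ∑ σ : Equiv.Perm (Fin t), g (ks ∘ σ) :=
        single_le_sum (f := fun σ : Equiv.Perm (Fin t) => g (ks ∘ σ)) (fun _ _ => zero_le)
          (mem_univ _)
  have tsum_perm (σ : Equiv.Perm (Fin t)) : ∑' ks : Fin t → α, g (ks ∘ σ) = ∑' ks, g ks :=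
    (Equiv.arrowCongr σ.symm (Equiv.refl α)).tsum_eq g
  calc ∑' ks, f ks ≤ ∑' ks, ∑ σ : Equiv.Perm (Fin t), g (ks ∘ σ) :=
        ENNReal.tsum_le_tsum le_sum_perm
    _ = ∑ σ : Equiv.Perm (Fin t), ∑' ks : Fin t → α, g (ks ∘ σ) :=
      Summable.tsum_finsetSum fun _ _ => ENNReal.summable
    _ = t.factorial * ∑' ks, g ks := by
      simp only [tsum_perm, sum_const, card_univ, Fintype.card_perm, Fintype.card_fin,
        nsmul_eq_mul]

theorem one_add_mul_inv_one_sub (r : ℝ≥0∞) : 1 + r * (1 - r)⁻¹ = (1 - r)⁻¹ := by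
  rw [← ENNReal.tsum_geometric_add_one, ← ENNReal.tsum_geometric,
    tsum_eq_zero_add' (f := fun n => r ^ n) ENNReal.summable, pow_zero]

theorem tsum_ite_lt_pow_sub (r : ℝ≥0∞) (c : ℕ) :
    ∑' x : ℕ, (if c < x then r ^ (x - c) else 0) = r * (1 - r)⁻¹ := by
  have head_eq_zero : ∑ x ∈ range (c + 1), (if c < x then r ^ (x - c) else 0) = 0 :=
    sum_eq_zero fun x hx => if_neg (by simpa [Nat.lt_succ_iff] using hx)
  have tail (x : ℕ) :
      (if c < x + (c + 1) then r ^ (x + (c + 1) - c) else 0) = r ^ (x + 1) := by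
    rw [if_pos (by omega), show x + (c + 1) - c = x + 1 by omega]
  rw [← ENNReal.summable.sum_add_tsum_nat_add' (k := c + 1), head_eq_zero, zero_add]
  simp only [tail, ENNReal.tsum_geometric_add_one]

theorem one_add_sum_mul_pow {R : Type*} [CommSemiring R] {r q : R} (h : 1 + r * q = q) (d : ℕ) :
    1 + ∑ i ∈ range d, r * q * q ^ i = q ^ d := by
  induction d with
  | zero => simp
  | succ d ih =>
    rw [sum_range_succ, ← add_assoc, ih]
    calc q ^ d + r * q * q ^ d = (1 + r * q) * q ^ d := by ring
      _ = q ^ (d + 1) := by rw [h, pow_succ']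

end BigOperators

section Union

open Finset

variable {α β : Type*} {t : ℕ} {r : ℝ≥0∞}

theorem tsum_pow_card_pow_le_tsum_pow_card_biUnion [DecidableEq β] (P : α → Finset β) (hr : r ≤ 1)
    (t : ℕ) :
    (∑' k, r ^ #(P k)) ^ t ≤ ∑' ks : Fin t → α, r ^ #(univ.biUnion fun j => P (ks j)) :=
  calc (∑' k, r ^ #(P k)) ^ t = ∑' ks : Fin t → α, ∏ j, r ^ #(P (ks j)) := by
        rw [tsum_pi_prod fun _ k => r ^ #(P k), prod_const, card_univ, Fintype.card_fin]
    _ ≤ ∑' ks : Fin t → α, r ^ #(univ.biUnion fun j => P (ks j)) := by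
      refine ENNReal.tsum_le_tsum fun ks => ?_
      rw [prod_pow_eq_pow_sum]
      exact pow_le_pow_right_of_le_one' hr card_biUnion_le

theorem monotone_cons [Preorder α] {a : α} {ks : Fin t → α} (ha : ∀ j, a ≤ ks j)
    (hks : Monotone ks) : Monotone (Fin.cons a ks : Fin (t + 1) → α) := by
  intro i j hij
  cases j using Fin.cases with
  | zero => rw [Fin.le_zero_iff.1 hij]
  | succ j =>
    cases i using Fin.cases with
    | zero => exact ha j
    | succ i => exact hks (Fin.succ_le_succ_iff.1 hij)

variable [DecidableEq α] {P : α → Finset α}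

theorem sum_card_filter_lt_le_card_biUnion [Preorder α] [DecidableLT α]
    (hP : ∀ k, ∀ x ∈ P k, x ≤ k)
    {ks : Fin (t + 1) → α} (hks : Monotone ks) :
    ∑ j : Fin t, #{x ∈ P (ks j.succ) | ks j.castSucc < x} ≤
      #(univ.biUnion fun j : Fin t => P (ks j.succ)) := by
  have disjoint_of_lt {i j : Fin t} (hij : i < j) :
      Disjoint {x ∈ P (ks i.succ) | ks i.castSucc < x} {x ∈ P (ks j.succ) | ks j.castSucc < x} := by
    rw [Finset.disjoint_left]
    intro x hxi hxj
    have le_castSucc : ks i.succ ≤ ks j.castSucc := hks (Fin.succ_le_castSucc_iff.2 hij)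
    exact (((hP _ x (mem_filter.1 hxi).1).trans le_castSucc).trans_lt (mem_filter.1 hxj).2).false
  rw [← card_biUnion fun i _ j _ hij => hij.lt_or_gt.elim disjoint_of_lt
    fun h => (disjoint_of_lt h).symm]
  exact card_le_card (biUnion_mono fun j _ => filter_subset _ _)

theorem tsum_pow_card_biUnion_le [LinearOrder α] {C : ℝ≥0∞} {a₀ : α} (ha₀ : IsBot a₀)
    (hP : ∀ k, ∀ x ∈ P k, x ≤ k) (hr : r ≤ 1)
    (hC : ∀ a, ∑' b, (if a ≤ b then r ^ #{x ∈ P b | a < x} else 0) ≤ C) (t : ℕ) :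
    ∑' ks : Fin t → α, r ^ #(univ.biUnion fun j => P (ks j)) ≤ t.factorial * C ^ t := by
  refine (tsum_le_factorial_mul_tsum_of_monotone (fun ks σ => ?_) fun ks hks => ?_).trans
    (mul_le_mul_right (tsum_prod_transition_le hC t a₀) _)
  · congr 2
    ext x
    simp only [mem_biUnion, mem_univ, true_and, Function.comp_apply]
    exact (σ.surjective.exists (p := fun j => x ∈ P (ks j))).symm
  · have mono := monotone_cons (fun j => ha₀ (ks j)) hks
    have step_le (j : Fin t) : (Fin.cons a₀ ks : Fin (t + 1) → α) j.castSucc ≤ ks j :=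
      mono j.castSucc_le_succ
    simp only [step_le, if_true, prod_pow_eq_pow_sum]
    exact pow_le_pow_right_of_le_one' hr (sum_card_filter_lt_le_card_biUnion hP mono)

end Union

section IndexVectors

open Finset

variable {ℓ : ℕ}

/-- Index vectors `k ∈ ℕ^ℓ`, with the coordinates `k₁, …, k_ℓ` of the paper numbered from `0`. The
colexicographic order is the paper's order on index vectors, compare `IdxLt`. -/
abbrev IndexVec (ℓ : ℕ) : Type := Colex (Fin ℓ → ℕ)

/-- `(0, …, 0, v, k_{i+1}, …, k_ℓ)`: the version of `truncIdx` for `IndexVec`. -/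
def truncate (k : IndexVec ℓ) (i : Fin ℓ) (v : ℕ) : IndexVec ℓ :=
  toColex (Function.update (fun s => if s < i then 0 else k s) i v)

/-- The level-`i` indices in `P^k`. -/
def levelNodes (k : IndexVec ℓ) (i : Fin ℓ) : Finset (IndexVec ℓ) :=
  (Icc 1 (k i)).image (truncate k i)

/-- The set `P^k` without the zero vector, which is the only vector that has no level. -/
def pathNodes (k : IndexVec ℓ) : Finset (IndexVec ℓ) :=
  univ.biUnion (levelNodes k)

/-- `x` is a level-`i` index: the version of `IsLevelIdx` for `IndexVec`. -/
def HasLevel (x : IndexVec ℓ) (i : Fin ℓ) : Prop :=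
  0 < x i ∧ ∀ s < i, x s = 0

theorem isBot_zero : IsBot (toColex 0 : IndexVec ℓ) := fun k =>
  Pi.toColex_monotone fun s => Nat.zero_le (k s)

theorem HasLevel.unique {x : IndexVec ℓ} {i j : Fin ℓ} (hi : HasLevel x i) (hj : HasLevel x j) :
    i = j := by
  by_contra hij
  rcases lt_or_gt_of_ne hij with h | h
  · exact hi.1.ne' (hj.2 i h)
  · exact hj.1.ne' (hi.2 j h)

theorem truncate_of_lt (k : IndexVec ℓ) {i s : Fin ℓ} (v : ℕ) (h : s < i) :
    truncate k i v s = 0 := by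
  simp [truncate, h, h.ne]

theorem truncate_self (k : IndexVec ℓ) (i : Fin ℓ) (v : ℕ) : truncate k i v i = v := by
  simp [truncate]

theorem truncate_of_gt (k : IndexVec ℓ) {i s : Fin ℓ} (v : ℕ) (h : i < s) :
    truncate k i v s = k s := by
  simp [truncate, h.ne', h.not_gt]

theorem truncate_injective (k : IndexVec ℓ) (i : Fin ℓ) : Function.Injective (truncate k i) :=
  toColex.injective.comp (Function.update_injective _ i)

theorem mem_levelNodes {k x : IndexVec ℓ} {i : Fin ℓ} :
    x ∈ levelNodes k i ↔ HasLevel x i ∧ x i ≤ k i ∧ ∀ s, i < s → x s = k s := by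
  constructor
  · intro hx
    obtain ⟨v, hv, rfl⟩ := mem_image.1 hx
    rw [mem_Icc] at hv
    exact ⟨⟨by rw [truncate_self]; exact hv.1, fun s => truncate_of_lt k v⟩,
      by rw [truncate_self]; exact hv.2, fun s => truncate_of_gt k v⟩
  · rintro ⟨⟨pos, below⟩, le, above⟩
    refine mem_image.2 ⟨x i, mem_Icc.2 ⟨pos, le⟩, funext fun s => ?_⟩
    rcases lt_trichotomy s i with h | rfl | h
    · rw [truncate_of_lt k _ h, below s h]
    · rw [truncate_self]
    · rw [truncate_of_gt k _ h, above s h]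

theorem card_levelNodes (k : IndexVec ℓ) (i : Fin ℓ) : #(levelNodes k i) = k i := by
  rw [levelNodes, card_image_of_injective _ (truncate_injective k i), Nat.card_Icc,
    Nat.add_sub_cancel]

theorem disjoint_levelNodes (k k' : IndexVec ℓ) {i j : Fin ℓ} (hij : i ≠ j) :
    Disjoint (levelNodes k i) (levelNodes k' j) :=
  Finset.disjoint_left.2 fun _ hi hj =>
    hij ((mem_levelNodes.1 hi).1.unique (mem_levelNodes.1 hj).1)

theorem le_of_mem_levelNodes {k x : IndexVec ℓ} {i : Fin ℓ} (hx : x ∈ levelNodes k i) : x ≤ k := by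
  obtain ⟨⟨-, below⟩, le, above⟩ := mem_levelNodes.1 hx
  refine Pi.toColex_monotone fun s => ?_
  rcases lt_trichotomy s i with h | rfl | h
  · exact (below s h).trans_le (Nat.zero_le _)
  · exact le
  · exact (above s h).le

theorem le_of_mem_pathNodes {k x : IndexVec ℓ} (hx : x ∈ pathNodes k) : x ≤ k := by
  obtain ⟨i, -, hi⟩ := mem_biUnion.1 hx
  exact le_of_mem_levelNodes hi

theorem card_filter_pathNodes (k : IndexVec ℓ) (p : IndexVec ℓ → Prop) [DecidablePred p] :
    #{x ∈ pathNodes k | p x} = ∑ i, #{x ∈ levelNodes k i | p x} := by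
  rw [pathNodes, filter_biUnion, card_biUnion fun i _ j _ hij =>
    disjoint_filter_filter (disjoint_levelNodes k k hij)]

theorem card_pathNodes (k : IndexVec ℓ) : #(pathNodes k) = ∑ i, k i := by
  simpa only [filter_true, card_levelNodes] using card_filter_pathNodes k fun _ => True

theorem card_biUnion_pathNodes {ι : Type*} (S : Finset ι) (ks : ι → IndexVec ℓ) :
    #(S.biUnion fun j => pathNodes (ks j)) =
      ∑ i, #(S.biUnion fun j => levelNodes (ks j) i) := by
  have union_by_level : (S.biUnion fun j => pathNodes (ks j)) =
      univ.biUnion fun i => S.biUnion fun j => levelNodes (ks j) i := by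
    ext x
    simp only [pathNodes, mem_biUnion, mem_univ, true_and]
    exact ⟨fun ⟨j, hj, i, hx⟩ => ⟨i, j, hj, hx⟩, fun ⟨i, j, hj, hx⟩ => ⟨j, hj, i, hx⟩⟩
  rw [union_by_level, card_biUnion]
  intro i _ i' _ hne
  simp only [disjoint_biUnion_left, disjoint_biUnion_right]
  exact fun _ _ _ _ => disjoint_levelNodes _ _ hne

theorem tsum_pow_card_pathNodes (r : ℝ≥0∞) (ℓ : ℕ) :
    ∑' k : IndexVec ℓ, r ^ #(pathNodes k) = (1 - r)⁻¹ ^ ℓ := by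
  calc ∑' k : IndexVec ℓ, r ^ #(pathNodes k) = ∑' k : Fin ℓ → ℕ, ∏ i, r ^ k i := by
        simp only [card_pathNodes, prod_pow_eq_pow_sum]
        rfl
    _ = (1 - r)⁻¹ ^ ℓ := by
      rw [tsum_pi_prod fun _ x => r ^ x]
      simp only [ENNReal.tsum_geometric, prod_const, card_univ, Fintype.card_fin]

end IndexVectors

section Branching

open Finset

variable {ℓ : ℕ} {r : ℝ≥0∞} {a b : IndexVec ℓ} {i s : Fin ℓ}

/-- The factor that coordinate `s`, with value `x`, contributes to the weight
`r ^ #{y ∈ P^b | a < y}` of a vector `b > a` whose topmost difference from `a` is at `i`. It is zero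
if the value `x` is impossible for such a `b`. -/
def branchFactor (r : ℝ≥0∞) (a : IndexVec ℓ) (i s : Fin ℓ) (x : ℕ) : ℝ≥0∞ :=
  if s < i then r ^ x
  else if s = i then (if a i < x then r ^ (x - a i) else 0)
  else if x = a s then 1 else 0

theorem tsum_branchFactor (r : ℝ≥0∞) (a : IndexVec ℓ) (i s : Fin ℓ) :
    ∑' x, branchFactor r a i s x =
      (if s = i then r * (1 - r)⁻¹ else 1) * (if s < i then (1 - r)⁻¹ else 1) := by
  unfold branchFactor
  rcases lt_trichotomy s i with h | rfl | h
  · simp [h, h.ne, ENNReal.tsum_geometric]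
  · simp [tsum_ite_lt_pow_sub]
  · simp [h.ne', h.not_gt]

theorem tsum_prod_branchFactor (r : ℝ≥0∞) (a : IndexVec ℓ) (i : Fin ℓ) :
    ∑' b : IndexVec ℓ, ∏ s, branchFactor r a i s (b s) = r * (1 - r)⁻¹ * (1 - r)⁻¹ ^ (i : ℕ) := by
  refine (tsum_pi_prod (branchFactor r a i)).trans ?_
  simp only [tsum_branchFactor, prod_mul_distrib, prod_ite_eq', mem_univ, if_true]
  rw [← prod_filter, prod_const, filter_gt_eq_Iio, Fin.card_Iio]

theorem lt_truncate (above : ∀ u, i < u → a u = b u) (hab : a i < b i) (hs : s ≤ i) {v : ℕ}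
    (hv : s = i → a i < v) : a < truncate b s v := by
  refine ⟨i, fun u hu => ?_, ?_⟩
  · exact (above u hu).trans (truncate_of_gt b v (hs.trans_lt hu)).symm
  · rcases hs.eq_or_lt with rfl | h
    · exact (hv rfl).trans_eq (truncate_self b s v).symm
    · exact hab.trans_eq (truncate_of_gt b v h).symm

theorem pow_card_filter_levelNodes_le_branchFactor (hr : r ≤ 1)
    (above : ∀ u, i < u → a u = b u) (hab : a i < b i) (s : Fin ℓ) :
    r ^ #{x ∈ levelNodes b s | a < x} ≤ branchFactor r a i s (b s) := by
  rcases lt_trichotomy s i with h | rfl | h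
  · have all_new : {x ∈ levelNodes b s | a < x} = levelNodes b s := by
      refine filter_true_of_mem fun x hx => ?_
      obtain ⟨v, -, rfl⟩ := mem_image.1 hx
      exact lt_truncate above hab h.le fun hsi => absurd hsi h.ne
    rw [all_new, card_levelNodes, branchFactor, if_pos h]
  · have new : (Ioc (a s) (b s)).image (truncate b s) ⊆ {x ∈ levelNodes b s | a < x} := by
      intro x hx
      obtain ⟨v, hv, rfl⟩ := mem_image.1 hx
      rw [mem_Ioc] at hv
      exact mem_filter.2 ⟨mem_image_of_mem _ (mem_Icc.2 ⟨by omega, hv.2⟩),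
        lt_truncate above hab le_rfl fun _ => hv.1⟩
    have le_card := card_le_card new
    rw [card_image_of_injective _ (truncate_injective b s), Nat.card_Ioc] at le_card
    rw [branchFactor, if_neg (lt_irrefl s), if_pos rfl, if_pos hab]
    exact pow_le_pow_right_of_le_one' hr le_card
  · rw [branchFactor, if_neg h.not_gt, if_neg h.ne', if_pos (above s h).symm]
    exact pow_le_one' hr _

theorem pow_card_filter_pathNodes_le_prod_branchFactor (hr : r ≤ 1)
    (above : ∀ u, i < u → a u = b u) (hab : a i < b i) :
    r ^ #{x ∈ pathNodes b | a < x} ≤ ∏ s, branchFactor r a i s (b s) := by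
  rw [card_filter_pathNodes, ← prod_pow_eq_pow_sum]
  exact prod_le_prod' fun s _ => pow_card_filter_levelNodes_le_branchFactor hr above hab s

theorem ite_pow_card_filter_pathNodes_le (hr : r ≤ 1) (a b : IndexVec ℓ) :
    (if a ≤ b then r ^ #{x ∈ pathNodes b | a < x} else 0) ≤
      (if b = a then 1 else 0) + ∑ i, ∏ s, branchFactor r a i s (b s) := by
  split_ifs with hab hba hba
  · exact (pow_le_one' hr _).trans le_self_add
  · obtain ⟨i, above, lt⟩ : a < b := lt_of_le_of_ne hab (Ne.symm hba)
    rw [zero_add]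
    exact (pow_card_filter_pathNodes_le_prod_branchFactor hr above lt).trans
      (single_le_sum (f := fun i => ∏ s, branchFactor r a i s (b s)) (fun _ _ => zero_le)
        (mem_univ i))
  all_goals exact zero_le

theorem tsum_pow_card_filter_pathNodes_le (hr : r ≤ 1) (a : IndexVec ℓ) :
    ∑' b, (if a ≤ b then r ^ #{x ∈ pathNodes b | a < x} else 0) ≤ (1 - r)⁻¹ ^ ℓ :=
  calc ∑' b, (if a ≤ b then r ^ #{x ∈ pathNodes b | a < x} else 0)
      ≤ ∑' b : IndexVec ℓ, ((if b = a then 1 else 0) + ∑ i, ∏ s, branchFactor r a i s (b s)) :=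
        ENNReal.tsum_le_tsum fun b => ite_pow_card_filter_pathNodes_le hr a b
    _ = 1 + ∑ i : Fin ℓ, r * (1 - r)⁻¹ * (1 - r)⁻¹ ^ (i : ℕ) := by
      rw [ENNReal.tsum_add, tsum_ite_eq, Summable.tsum_finsetSum fun _ _ => ENNReal.summable]
      simp only [tsum_prod_branchFactor]
    _ = (1 - r)⁻¹ ^ ℓ := by
      rw [Fin.sum_univ_eq_sum_range fun i => r * (1 - r)⁻¹ * (1 - r)⁻¹ ^ i]
      exact one_add_sum_mul_pow (one_add_mul_inv_one_sub r) ℓ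

end Branching

section Encoding

open Finset

variable {t ℓ : ℕ}

theorem toIdx_add_one (k : Fin ℓ → ℕ) (s : Fin ℓ) : toIdx ℓ k (s + 1) = k s := by
  simp [toIdx]

theorem toIdx_injective : Function.Injective (toIdx ℓ) := fun k k' h =>
  funext fun s => by rw [← toIdx_add_one k, h, toIdx_add_one]

theorem canon_toIdx (k : Fin ℓ → ℕ) : Canon ℓ (toIdx ℓ k) := fun _ _ => dif_neg (by omega)

theorem toIdx_truncate (k : IndexVec ℓ) (i : Fin ℓ) (v : ℕ) :
    toIdx ℓ (ofColex (truncate k i v)) = truncIdx (toIdx ℓ (ofColex k)) (i + 1) v := by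
  funext s
  by_cases hs : 1 ≤ s ∧ s ≤ ℓ
  · obtain ⟨s, rfl⟩ : ∃ u : Fin ℓ, s = u + 1 := ⟨⟨s - 1, by omega⟩, by simp; omega⟩
    simp only [truncIdx, toIdx_add_one, Nat.add_right_cancel_iff, Nat.add_lt_add_iff_right,
      Fin.val_inj, Fin.val_fin_lt, Pi.ofColex_apply]
    rcases lt_trichotomy s i with h | rfl | h
    · rw [if_neg h.ne, if_neg h.not_gt, truncate_of_lt k v h]
    · rw [if_pos rfl, truncate_self]
    · rw [if_neg h.ne', if_pos h, truncate_of_gt k v h]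
  · have ne : s ≠ i + 1 := by omega
    simp [truncIdx, toIdx, hs, ne]

theorem canon_and_isLevelIdx_and_inP_iff {k x : ℕ → ℕ} {i : ℕ} (hk : Canon ℓ k) (hi : 1 ≤ i)
    (hiℓ : i ≤ ℓ) :
    (Canon ℓ x ∧ IsLevelIdx ℓ i x ∧ InP ℓ x k) ↔ ∃ v ∈ Icc 1 (k i), truncIdx k i v = x := by
  constructor
  · rintro ⟨canon, ⟨pos, below⟩, inP⟩
    obtain ⟨above, le⟩ : (∀ s, i < s → s ≤ ℓ → x s = k s) ∧ x i ≤ k i := by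
      rcases inP with eq | ⟨-, j, hj, hjℓ, above, posj, le, belowj⟩
      · exact ⟨fun s hs => eq s (by omega), (eq i hi hiℓ).le⟩
      · obtain rfl : i = j := by
          rcases lt_trichotomy i j with h | h | h
          · exact absurd (belowj i hi h) pos.ne'
          · exact h
          · exact absurd (below j hj h) posj.ne'
        exact ⟨above, le⟩
    refine ⟨x i, mem_Icc.2 ⟨pos, le⟩, funext fun s => ?_⟩
    unfold truncIdx
    split_ifs with hsi his
    · rw [hsi]
    · by_cases hs : s ≤ ℓ
      · exact (above s his hs).symm
      · rw [hk s (by omega), canon s (by omega)]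
    · rcases Nat.eq_zero_or_pos s with hs | hs
      · exact (canon s (Or.inl hs)).symm
      · exact (below s hs (by omega)).symm
  · rintro ⟨v, hv, rfl⟩
    rw [mem_Icc] at hv
    have self : truncIdx k i v i = v := if_pos rfl
    have above (s : ℕ) (hs : i < s) : truncIdx k i v s = k s := by simp [truncIdx, hs, hs.ne']
    have below (s : ℕ) (hs : s < i) : truncIdx k i v s = 0 := by simp [truncIdx, hs.ne, hs.not_gt]
    refine ⟨?_, ⟨self.symm ▸ hv.1, fun s _ => below s⟩, ?_⟩
    · rintro s (hs | hs)
      · exact below s (by omega)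
      · rw [above s (by omega), hk s (Or.inr hs)]
    · exact or_iff_not_imp_left.2 fun ne => ⟨ne, i, hi, hiℓ, fun s hs _ => above s hs,
        self.symm ▸ hv.1, self.symm ▸ hv.2, fun s _ => below s⟩

theorem Kcount_ofFn_toIdx (ks : Fin t → IndexVec ℓ) (i : Fin ℓ) :
    Kcount ℓ (List.ofFn fun j => toIdx ℓ (ofColex (ks j))) (i + 1) =
      #(univ.biUnion fun j => levelNodes (ks j) i) := by
  rw [← Set.ncard_coe_finset,
    ← Set.ncard_image_of_injective _ (toIdx_injective.comp ofColex.injective), Kcount]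
  congr 1
  ext x
  have mem_iff (j : Fin t) := canon_and_isLevelIdx_and_inP_iff (x := x)
    (canon_toIdx (ofColex (ks j))) (Nat.le_add_left 1 i) i.2
  simp only [toIdx_add_one, ← toIdx_truncate] at mem_iff
  simp only [Set.mem_ofPred_eq, List.mem_ofFn, exists_exists_eq_and, ← exists_and_left, mem_iff,
    Set.mem_image, mem_coe, mem_biUnion, mem_univ, true_and, levelNodes, mem_image,
    Function.comp_apply]
  constructor
  · rintro ⟨j, v, hv, rfl⟩
    exact ⟨_, ⟨j, v, hv, rfl⟩, rfl⟩
  · rintro ⟨_, ⟨j, v, hv, rfl⟩, rfl⟩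
    exact ⟨j, v, hv, rfl⟩

theorem prod_pow_Kcount_ofFn_toIdx (r : ℝ≥0∞) (ks : Fin t → IndexVec ℓ) :
    ∏ i ∈ Icc 1 ℓ, r ^ Kcount ℓ (List.ofFn fun j => toIdx ℓ (ofColex (ks j))) i =
      r ^ #(univ.biUnion fun j => pathNodes (ks j)) := by
  rw [card_biUnion_pathNodes, ← prod_pow_eq_pow_sum]
  simp only [← Kcount_ofFn_toIdx, prod_Icc_one_eq_prod_fin]

theorem tsum_prod_pow_Kcount (t ℓ : ℕ) (r : ℝ≥0∞) :
    ∑' ks : Fin t → Fin ℓ → ℕ, ∏ i ∈ Icc 1 ℓ, r ^ Kcount ℓ (List.ofFn fun j => toIdx ℓ (ks j)) i =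
      ∑' ks : Fin t → IndexVec ℓ, r ^ #(univ.biUnion fun j => pathNodes (ks j)) :=
  tsum_congr (prod_pow_Kcount_ofFn_toIdx r)

end Encoding

theorem statement_9_general (t ℓ : ℕ) {r : ℝ≥0∞} (hr : r ≤ 1) :
    (1 - r)⁻¹ ^ (t * ℓ) ≤
        (∑' ks : Fin t → Fin ℓ → ℕ,
          ∏ i ∈ Finset.Icc 1 ℓ, r ^ Kcount ℓ (List.ofFn fun j => toIdx ℓ (ks j)) i) ∧
      (∑' ks : Fin t → Fin ℓ → ℕ,
          ∏ i ∈ Finset.Icc 1 ℓ, r ^ Kcount ℓ (List.ofFn fun j => toIdx ℓ (ks j)) i) ≤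
        (t.factorial : ℝ≥0∞) * (1 - r)⁻¹ ^ (t * ℓ) := by
  rw [tsum_prod_pow_Kcount, mul_comm t ℓ, pow_mul]
  constructor
  · rw [← tsum_pow_card_pathNodes]
    exact tsum_pow_card_pow_le_tsum_pow_card_biUnion pathNodes hr t
  · refine tsum_pow_card_biUnion_le isBot_zero (fun _ _ => le_of_mem_pathNodes) hr (fun a => ?_) t
    -- The order and decidability instances on the two sides agree only up to unfolding.
    convert tsum_pow_card_filter_pathNodes_le hr a <;> rfl

/-- Lemma 5.18: counting lemma for unions of `t` root-to-node paths. -/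
theorem statement_9 (t ℓ : ℕ) (ht : 0 < t) (hℓ : 0 < ℓ) :
    (2 : ℝ≥0∞) ^ (t * ℓ) ≤
        (∑' ks : Fin t → Fin ℓ → ℕ,
          ∏ i ∈ Finset.Icc 1 ℓ,
            ((2 : ℝ≥0∞) ^ Kcount ℓ (List.ofFn fun j => toIdx ℓ (ks j)) i)⁻¹) ∧
      (∑' ks : Fin t → Fin ℓ → ℕ,
          ∏ i ∈ Finset.Icc 1 ℓ,
            ((2 : ℝ≥0∞) ^ Kcount ℓ (List.ofFn fun j => toIdx ℓ (ks j)) i)⁻¹) ≤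
        (t.factorial : ℝ≥0∞) * 2 ^ (t * (ℓ + 1)) := by
  have h := statement_9_general t ℓ (r := 2⁻¹) (by simp)
  simp only [ENNReal.one_sub_inv_two, inv_inv, ← ENNReal.inv_pow] at h
  exact ⟨h.1, h.2.trans (by gcongr <;> simp)⟩

end EDW
end
end

section
/- Fix k¹ < k² in ℕ^ℓ. For every outcome of the relaxed extended walk w^{k¹,k²} and its dependency tree T in which both μ^{k¹} and μ^{k²} exist, there is no collision between the paths p(μ^{k¹}) and p(μ^{k²}). -/
open MeasureTheory
open scoped Classical ENNReal

noncomputable section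

namespace EDW

variable {m n : ℕ}

/-!
The stored set at level `λ` is what keeps the two paths apart. Suppose `k¹` and `k²` already differ
above `λ`. Then the level-`λ` nodes of `p(μ^{k¹})` and of `p(μ^{k²})` are produced by two different
calls at level `λ`. The first of these calls runs earlier and stores the values of its first `k¹_λ`
nodes; the second one starts from the stored set and only ever uses values outside its current set.
In between the stored set is not overwritten, because the only call that writes it is the one whose
index agrees with `k¹` above `λ`. If instead `k¹` and `k²` agree above `λ`, then `k¹_λ ≤ k²_λ`, and
every level-`λ` node of `p(μ^{k¹})` is also on `p(μ^{k²})`, so that it takes part in no collision.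
-/

/-! ### Comparing index vectors above a level -/

/-- The index vectors `c` and `k` have the same components at the levels `i + 1, …, ℓ`. -/
def AgreeAbove (ℓ i : ℕ) (c k : ℕ → ℕ) : Prop := ∀ t, i < t → t ≤ ℓ → c t = k t

/-- The condition `k_t < k'_t` for some level `t > i`, under which the relaxed walk stores and
reuses sets at level `i`. -/
def SplitAbove (ℓ i : ℕ) (k k' : ℕ → ℕ) : Prop := ∃ t, i < t ∧ t ≤ ℓ ∧ k t < k' t

theorem AgreeAbove.congr_left {ℓ i : ℕ} {c c' k : ℕ → ℕ} (h : AgreeAbove ℓ i c k)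
    (hc : ∀ t, t ≤ ℓ → c t = c' t) : AgreeAbove ℓ i c' k :=
  fun t hit htℓ => (hc t htℓ).symm.trans (h t hit htℓ)

theorem SplitAbove.not_agreeAbove {ℓ i : ℕ} {c k k' : ℕ → ℕ} (hs : SplitAbove ℓ i k k')
    (h' : AgreeAbove ℓ i c k') : ¬ AgreeAbove ℓ i c k := by
  obtain ⟨t, hit, htℓ, hlt⟩ := hs
  intro h
  exact hlt.ne ((h t hit htℓ).symm.trans (h' t hit htℓ))

theorem IdxLt.asymm {ℓ : ℕ} {k k' : ℕ → ℕ} (h : IdxLt ℓ k k') : ¬ IdxLt ℓ k' k := by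
  obtain ⟨i, -, hiℓ, hi, hi_above⟩ := h
  rintro ⟨j, -, hjℓ, hj, hj_above⟩
  rcases lt_trichotomy i j with hij | rfl | hji
  · exact hj.ne (hi_above j hij hjℓ).symm
  · exact lt_asymm hi hj
  · exact hi.ne (hj_above i hji hiℓ).symm

theorem IdxLt.agreeAbove_and_le {ℓ i : ℕ} {k k' : ℕ → ℕ} (h : IdxLt ℓ k k') (hi : i ≤ ℓ)
    (hs : ¬ SplitAbove ℓ i k k') : AgreeAbove ℓ i k k' ∧ k i ≤ k' i := by
  obtain ⟨j, -, hjℓ, hj, hj_above⟩ := h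
  have hji : j ≤ i := not_lt.1 fun hij => hs ⟨j, hij, hjℓ, hj⟩
  refine ⟨fun t hit htℓ => hj_above t (hji.trans_lt hit) htℓ, ?_⟩
  rcases hji.eq_or_lt with rfl | hji
  · exact hj.le
  · exact (hj_above i hji hi).le

theorem truncIdx_self (k : ℕ → ℕ) (i j : ℕ) : truncIdx k i j i = j := if_pos rfl

theorem truncIdx_of_lt (k : ℕ → ℕ) {i t : ℕ} (j : ℕ) (h : t < i) : truncIdx k i j t = 0 := by
  rw [truncIdx, if_neg h.ne, if_neg h.not_gt]

theorem truncIdx_of_gt (k : ℕ → ℕ) {i t : ℕ} (j : ℕ) (h : i < t) : truncIdx k i j t = k t := by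
  rw [truncIdx, if_neg h.ne', if_pos h]

theorem truncIdx_congr {k k' : ℕ → ℕ} {i : ℕ} (j : ℕ) (h : ∀ t, i < t → k t = k' t) :
    truncIdx k i j = truncIdx k' i j := by
  funext t
  rcases lt_trichotomy t i with ht | rfl | ht
  · rw [truncIdx_of_lt k j ht, truncIdx_of_lt k' j ht]
  · rw [truncIdx_self, truncIdx_self]
  · rw [truncIdx_of_gt k j ht, truncIdx_of_gt k' j ht, h t ht]

theorem truncIdx_zero_eq {k : ℕ → ℕ} {i : ℕ} (h : ∀ t, t ≤ i → k t = 0) :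
    truncIdx k i 0 = k := by
  funext t
  rcases lt_trichotomy t i with ht | rfl | ht
  · rw [truncIdx_of_lt k 0 ht, h t ht.le]
  · rw [truncIdx_self, h t le_rfl]
  · exact truncIdx_of_gt k 0 ht

theorem agreeAbove_truncIdx {ℓ i j : ℕ} {c k : ℕ → ℕ} (hi : i + 1 ≤ ℓ) :
    AgreeAbove ℓ i (truncIdx c (i + 1) j) k ↔ j = k (i + 1) ∧ AgreeAbove ℓ (i + 1) c k := by
  constructor
  · intro h
    refine ⟨?_, fun t ht htℓ => ?_⟩
    · rw [← h (i + 1) i.lt_succ_self hi, truncIdx_self]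
    · rw [← h t (by omega) htℓ, truncIdx_of_gt c j ht]
  · rintro ⟨hj, h⟩ t ht htℓ
    rcases (Nat.succ_le_of_lt ht).eq_or_lt with rfl | ht'
    · rw [truncIdx_self, hj]
    · rw [truncIdx_of_gt c j ht', h t ht' htℓ]

/-! ### Indices along a list of nodes -/

section IndexedLists

variable {α : Type*} (lev : α → ℕ)

/-- The index of the last node of `w`, when the nodes of `w`, of levels given by `lev`, are visited
in order starting from a node of index `c`. -/
def idxAfter (c : ℕ → ℕ) (w : List α) : ℕ → ℕ :=
  w.foldl (fun c z => truncIdx c (lev z) (c (lev z) + 1)) c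

/-- The nodes of a list, each paired with its index, when the list is visited starting from a node
of index `c`. -/
def withIdx : (ℕ → ℕ) → List α → List ((ℕ → ℕ) × α)
  | _, [] => []
  | c, z :: w => (idxAfter lev c [z], z) :: withIdx (idxAfter lev c [z]) w

variable {lev}

theorem idxAfter_append (c : ℕ → ℕ) (u v : List α) :
    idxAfter lev c (u ++ v) = idxAfter lev (idxAfter lev c u) v :=
  List.foldl_append

theorem withIdx_append (c : ℕ → ℕ) (u v : List α) :
    withIdx lev c (u ++ v) = withIdx lev c u ++ withIdx lev (idxAfter lev c u) v := by
  induction u generalizing c with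
  | nil => rfl
  | cons z u ih => exact congrArg (List.cons _) (ih _)

theorem mem_withIdx {c : ℕ → ℕ} {w : List α} {p : (ℕ → ℕ) × α} :
    p ∈ withIdx lev c w ↔ ∃ u v, w = u ++ p.2 :: v ∧ p.1 = idxAfter lev c (u ++ [p.2]) := by
  constructor
  · induction w generalizing c with
    | nil => simp [withIdx]
    | cons z w ih =>
      intro hp
      rcases List.mem_cons.1 hp with rfl | hp
      · exact ⟨[], w, rfl, rfl⟩
      · obtain ⟨u, v, rfl, hc⟩ := ih hp
        exact ⟨z :: u, v, rfl, hc⟩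
  · rintro ⟨u, v, rfl, hp⟩
    rw [withIdx_append]
    refine List.mem_append_right _ (List.mem_cons.2 (Or.inl ?_))
    rw [← idxAfter_append, ← hp]

theorem snd_mem_of_mem_withIdx {c : ℕ → ℕ} {w : List α} {p : (ℕ → ℕ) × α}
    (hp : p ∈ withIdx lev c w) : p.2 ∈ w := by
  obtain ⟨u, v, hw, -⟩ := mem_withIdx.1 hp
  simp [hw]

theorem idxAfter_of_lt {c : ℕ → ℕ} {w : List α} {i t : ℕ} (hw : ∀ z ∈ w, lev z ≤ i)
    (ht : i < t) : idxAfter lev c w t = c t := by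
  induction w generalizing c with
  | nil => rfl
  | cons z w ih =>
    have hz : lev z < t := (hw z List.mem_cons_self).trans_lt ht
    exact (ih fun z' hz' => hw z' (List.mem_cons_of_mem z hz')).trans (truncIdx_of_gt c _ hz)

theorem fst_apply_of_mem_withIdx {c : ℕ → ℕ} {w : List α} {p : (ℕ → ℕ) × α} {i t : ℕ}
    (hp : p ∈ withIdx lev c w) (hw : ∀ z ∈ w, lev z ≤ i) (ht : i < t) : p.1 t = c t := by
  obtain ⟨u, v, rfl, hc⟩ := mem_withIdx.1 hp
  rw [hc]
  exact idxAfter_of_lt (fun z hz => hw z (by simp at hz ⊢; tauto)) ht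

theorem idxAfter_append_concat {c : ℕ → ℕ} {acc u : List α} {x : α} {i j : ℕ}
    (hacc : idxAfter lev c acc = truncIdx c (i + 1) j) (hu : ∀ z ∈ u, lev z ≤ i)
    (hx : lev x = i + 1) : idxAfter lev c (acc ++ u ++ [x]) = truncIdx c (i + 1) (j + 1) := by
  have hpre : ∀ t, i < t → idxAfter lev c (acc ++ u) t = truncIdx c (i + 1) j t := by
    intro t ht
    rw [idxAfter_append, hacc, idxAfter_of_lt hu ht]
  rw [idxAfter_append]
  change truncIdx _ (lev x) (_ + 1) = _
  rw [hx, hpre _ i.lt_succ_self, truncIdx_self]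
  exact truncIdx_congr _ fun t ht => by
    rw [hpre t (i.lt_succ_self.trans ht), truncIdx_of_gt c j ht]

end IndexedLists

/-! ### Indices in the dependency tree -/

section DependencyTree

variable {lvl : ℕ → ℕ}

theorem onPath_succ {ν μ : ℕ} :
    OnPath lvl ν (μ + 1) ↔ ν = μ + 1 ∨ OnPath lvl ν μ ∧ lvl (μ + 1) ≤ lvl ν := by
  constructor
  · rintro ⟨hle, hmax⟩
    rcases hle.eq_or_lt with rfl | hlt
    · exact Or.inl rfl
    · exact Or.inr ⟨⟨Nat.le_of_lt_succ hlt, fun ρ hνρ hρ => hmax ρ hνρ (hρ.trans μ.le_succ)⟩,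
        hmax (μ + 1) hlt le_rfl⟩
  · rintro (rfl | ⟨⟨hle, hmax⟩, hlast⟩)
    · exact ⟨le_rfl, fun ρ hνρ hρ => absurd hρ hνρ.not_ge⟩
    · refine ⟨hle.trans μ.le_succ, fun ρ hνρ hρ => ?_⟩
      rcases hρ.eq_or_lt with rfl | hlt
      · exact hlast
      · exact hmax ρ hνρ (Nat.le_of_lt_succ hlt)

theorem idxAt_succ (lvl : ℕ → ℕ) (μ : ℕ) :
    idxAt lvl (μ + 1) =
      truncIdx (idxAt lvl μ) (lvl (μ + 1)) (idxAt lvl μ (lvl (μ + 1)) + 1) := by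
  funext t
  rcases lt_trichotomy t (lvl (μ + 1)) with ht | rfl | ht
  · rw [truncIdx_of_lt _ _ ht, idxAt, Finset.card_eq_zero, Finset.filter_eq_empty_iff]
    grind [onPath_succ]
  · rw [truncIdx_self, idxAt, idxAt, ← Finset.card_insert_of_notMem (a := μ + 1) (by simp)]
    congr 1
    ext ν
    simp only [Finset.mem_filter, Finset.mem_range, Finset.mem_insert, onPath_succ]
    grind
  · rw [truncIdx_of_gt _ _ ht, idxAt, idxAt]
    congr 1
    ext ν
    simp only [Finset.mem_filter, Finset.mem_range, onPath_succ]
    grind [OnPath]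

theorem idxAt_eq_zero {μ t : ℕ} (ht : t < lvl μ) : idxAt lvl μ t = 0 := by
  rw [idxAt, Finset.card_eq_zero, Finset.filter_eq_empty_iff]
  rintro ν - ⟨⟨hle, hmax⟩, rfl⟩
  rcases hle.eq_or_lt with rfl | hlt
  · exact ht.false
  · exact (hmax μ hlt le_rfl).not_gt ht

theorem idxAt_level_pos (lvl : ℕ → ℕ) (μ : ℕ) : 0 < idxAt lvl μ (lvl μ) := by
  refine Finset.card_pos.2 ⟨μ, ?_⟩
  simp only [Finset.mem_filter, Finset.mem_range, Nat.lt_succ_self, true_and, and_true]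
  exact ⟨le_rfl, fun ρ hμρ hρ => absurd hρ hμρ.not_ge⟩

theorem idxAt_eq_of_forall_lt {ν μ t : ℕ} (h : ν ≤ μ)
    (hl : ∀ σ, ν < σ → σ ≤ μ → lvl σ < t) : idxAt lvl μ t = idxAt lvl ν t := by
  induction μ, h using Nat.le_induction with
  | base => rfl
  | succ μ hμ ih =>
    rw [idxAt_succ, truncIdx_of_gt _ _ (hl _ (Nat.lt_succ_of_le hμ) le_rfl)]
    exact ih fun σ hνσ hσ => hl σ hνσ (hσ.trans μ.le_succ)

theorem idxAt_le_of_forall_le {ν μ t : ℕ} (h : ν ≤ μ)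
    (hl : ∀ σ, ν < σ → σ ≤ μ → lvl σ ≤ t) : idxAt lvl ν t ≤ idxAt lvl μ t := by
  induction μ, h using Nat.le_induction with
  | base => rfl
  | succ μ hμ ih =>
    refine (ih fun σ hνσ hσ => hl σ hνσ (hσ.trans μ.le_succ)).trans ?_
    rw [idxAt_succ]
    rcases (hl _ (Nat.lt_succ_of_le hμ) le_rfl).eq_or_lt with rfl | hlt
    · rw [truncIdx_self]
      exact Nat.le_succ _
    · rw [truncIdx_of_gt _ _ hlt]

theorem OnPath.idxAt_eq {ν μ t : ℕ} (h : OnPath lvl ν μ) (ht : lvl ν < t) :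
    idxAt lvl ν t = idxAt lvl μ t :=
  (idxAt_eq_of_forall_lt h.1 fun σ hνσ hσ => (h.2 σ hνσ hσ).trans_lt ht).symm

theorem OnPath.idxAt_level_le {ν μ : ℕ} (h : OnPath lvl ν μ) :
    idxAt lvl ν (lvl ν) ≤ idxAt lvl μ (lvl ν) :=
  idxAt_le_of_forall_le h.1 h.2

theorem exists_idxAt_lt {ν μ : ℕ} (h : ν < μ) :
    ∃ σ, ν < σ ∧ σ ≤ μ ∧ (∀ τ, ν < τ → τ ≤ μ → lvl τ ≤ lvl σ) ∧
      idxAt lvl ν (lvl σ) < idxAt lvl μ (lvl σ) := by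
  obtain ⟨σ, hσ, hmax⟩ := Finset.exists_max_image (Finset.Ioc ν μ) lvl ⟨μ, by simp [h]⟩
  simp only [Finset.mem_Ioc, and_imp] at hσ hmax
  obtain ⟨ρ, rfl⟩ : ∃ ρ, σ = ρ + 1 := Nat.exists_eq_add_one_of_ne_zero (by omega)
  refine ⟨ρ + 1, hσ.1, hσ.2, hmax, ?_⟩
  calc idxAt lvl ν (lvl (ρ + 1))
      ≤ idxAt lvl ρ (lvl (ρ + 1)) :=
        idxAt_le_of_forall_le (Nat.le_of_lt_succ hσ.1) fun τ hντ hτ => hmax τ hντ (by omega)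
    _ < idxAt lvl (ρ + 1) (lvl (ρ + 1)) := by
        rw [idxAt_succ, truncIdx_self]
        exact Nat.lt_succ_self _
    _ ≤ idxAt lvl μ (lvl (ρ + 1)) :=
        idxAt_le_of_forall_le hσ.2 fun τ hρτ hτ => hmax τ (hσ.1.trans hρτ) hτ

/-- For `ν < μ`, a position of largest level in `(ν, μ]` witnesses that the index of `μ` is
lexicographically larger than that of `ν`. -/
theorem onPath_of_idxAt {ν μ : ℕ} (heq : ∀ t, lvl ν < t → idxAt lvl ν t = idxAt lvl μ t)
    (hle : idxAt lvl ν (lvl ν) ≤ idxAt lvl μ (lvl ν)) : OnPath lvl ν μ := by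
  have hνμ : ν ≤ μ := by
    by_contra! hμν
    obtain ⟨σ, -, -, hmax, hlt⟩ := exists_idxAt_lt (lvl := lvl) hμν
    rcases (hmax ν hμν le_rfl).eq_or_lt with hσ | hσ
    · exact (hσ ▸ hle).not_gt hlt
    · exact hlt.ne' (heq _ hσ)
  refine ⟨hνμ, fun ρ hνρ hρμ => ?_⟩
  obtain ⟨σ, -, -, hmax, hlt⟩ := exists_idxAt_lt (lvl := lvl) (hνρ.trans_le hρμ)
  exact (hmax ρ hνρ hρμ).trans (not_lt.1 fun hσ => hlt.ne (heq _ hσ))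

end DependencyTree

/-! ### Levels of nodes -/

section Levels

variable {ℓ : ℕ} {g : ℕ → Dom m → Bool}

/-- The level of a node, which only depends on its tags, computed in the one-node walk. -/
def nodeLevel (ℓ : ℕ) (g : ℕ → Dom m → Bool) (z : Node m n) : ℕ := levelOf ℓ g [z] 1

/-- The value computed at `z` leaves the loop, for every level in `{1, …, i}` at which one has been
computed. -/
def Inactive (g : ℕ → Dom m → Bool) (i : ℕ) (z : Node m n) : Prop :=
  ∀ t, 1 ≤ t → t ≤ i → ∀ y, z.tag t = some y → g t y = false

/-- The node `z` with `a_i(z)` set to `y`. -/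
def Node.setTag (z : Node m n) (i : ℕ) (y : Dom m) : Node m n :=
  ⟨z.vtx, fun t => if t = i then some y else z.tag t⟩

theorem Node.setTag_tag_self (z : Node m n) (i : ℕ) (y : Dom m) :
    (z.setTag i y).tag i = some y := if_pos rfl

theorem Inactive.setTag_succ {i : ℕ} {z : Node m n} (h : Inactive g i z) (y : Dom m) :
    Inactive g i (z.setTag (i + 1) y) := by
  intro t ht hti y' hy'
  have htag : (z.setTag (i + 1) y).tag t = z.tag t := if_neg (by omega)
  rw [htag] at hy'
  exact h t ht hti y' hy'

theorem Inactive.succ {i : ℕ} {z : Node m n} {y : Dom m} (h : Inactive g i z)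
    (hy : z.tag (i + 1) = some y) (hg : g (i + 1) y = false) : Inactive g (i + 1) z := by
  intro t ht hti y' hy'
  rcases hti.eq_or_lt with rfl | hlt
  · obtain rfl : y = y' := Option.some.inj (hy.symm.trans hy')
    exact hg
  · exact h t ht (Nat.le_of_lt_succ hlt) y' hy'

theorem levelOf_pos (ℓ : ℕ) (g : ℕ → Dom m → Bool) (w : List (Node m n)) (μ : ℕ) :
    1 ≤ levelOf ℓ g w μ := by
  unfold levelOf
  split_ifs with h
  · exact (Nat.find_spec h).1.1
  · exact Nat.le_add_left 1 ℓ

theorem levelOf_le (ℓ : ℕ) (g : ℕ → Dom m → Bool) (w : List (Node m n)) (μ : ℕ) :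
    levelOf ℓ g w μ ≤ ℓ + 1 := by
  unfold levelOf
  split_ifs with h
  · exact (Nat.find_spec h).1.2.trans ℓ.le_succ
  · exact le_rfl

theorem levelOf_eq_top {w : List (Node m n)} {μ : ℕ}
    (h : ∀ t, 1 ≤ t → t ≤ ℓ → ∀ y, tagAt w μ t = some y → g t y = false) :
    levelOf ℓ g w μ = ℓ + 1 := by
  refine dif_neg ?_
  rintro ⟨t, ⟨ht, htℓ⟩, y, hy, hg⟩
  simp [h t ht htℓ y hy] at hg

theorem levelOf_zero (ℓ : ℕ) (g : ℕ → Dom m → Bool) (w : List (Node m n)) :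
    levelOf ℓ g w 0 = ℓ + 1 :=
  levelOf_eq_top fun t _ _ y hy => by simp [tagAt] at hy

theorem levelOf_length {w : List (Node m n)} (h : ∀ x ∈ w.getLast?, Inactive g ℓ x) :
    levelOf ℓ g w w.length = ℓ + 1 := by
  refine levelOf_eq_top fun t ht htℓ y hy => ?_
  rw [tagAt, ← List.getLast?_eq_getElem?] at hy
  split_ifs at hy
  obtain ⟨x, hx, hxy⟩ := Option.bind_eq_some_iff.1 hy
  exact h x hx t ht htℓ y hxy

theorem tagAt_succ {w : List (Node m n)} {p : ℕ} (hp : p < w.length) (i : ℕ) :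
    tagAt w (p + 1) i = w[p].tag i := by
  simp [tagAt, hp]

theorem levelOf_succ {w : List (Node m n)} {p : ℕ} (hp : p < w.length) :
    levelOf ℓ g w (p + 1) = nodeLevel ℓ g w[p] := by
  have htag : ∀ i, tagAt w (p + 1) i = tagAt [w[p]] 1 i := fun i => tagAt_succ hp i
  simp only [nodeLevel, levelOf, htag]

theorem nodeLevel_eq {i : ℕ} {z : Node m n} {y : Dom m} (hz : Inactive g i z) (hi : i + 1 ≤ ℓ)
    (hy : z.tag (i + 1) = some y) (hg : g (i + 1) y = true) : nodeLevel ℓ g z = i + 1 := by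
  have hex : ∃ i, (1 ≤ i ∧ i ≤ ℓ) ∧ ∃ y, tagAt [z] 1 i = some y ∧ g i y = true :=
    ⟨i + 1, ⟨Nat.le_add_left 1 i, hi⟩, y, hy, hg⟩
  rw [nodeLevel, levelOf, dif_pos hex, Nat.find_eq_iff]
  refine ⟨⟨⟨Nat.le_add_left 1 i, hi⟩, y, hy, hg⟩, ?_⟩
  rintro t hti ⟨⟨ht, -⟩, y', hy', hg'⟩
  simp [hz t ht (Nat.le_of_lt_succ hti) y' hy'] at hg'

theorem idxAt_levelOf_eq_idxAfter {w : List (Node m n)} {μ t : ℕ} (hμ : μ ≤ w.length)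
    (ht : t ≤ ℓ) :
    idxAt (levelOf ℓ g w) μ t = idxAfter (nodeLevel ℓ g) (fun _ => 0) (w.take μ) t := by
  induction μ generalizing t with
  | zero => exact idxAt_eq_zero (by rw [levelOf_zero]; omega)
  | succ p ih =>
    have hp : p < w.length := hμ
    rw [idxAt_succ, levelOf_succ hp, ← List.take_append_getElem hp, idxAfter_append]
    change _ = truncIdx _ (nodeLevel ℓ g w[p]) (_ + 1) t
    rcases lt_trichotomy t (nodeLevel ℓ g w[p]) with h | rfl | h
    · rw [truncIdx_of_lt _ _ h, truncIdx_of_lt _ _ h]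
    · rw [truncIdx_self, truncIdx_self, ih hp.le ht]
    · rw [truncIdx_of_gt _ _ h, truncIdx_of_gt _ _ h, ih hp.le ht]

end Levels

/-! ### Nodes kept apart by the store -/

section Separation

variable {ℓ : ℕ} {k1 k2 : ℕ → ℕ}

/-- The invariant behind the absence of collisions, for a level-`lam` node of index `c` and value
`v`. When `k1` and `k2` split above `lam`, the value is in the stored set if the node is on the path
to `k1`, and it is not in the stored set if the node is produced by the level-`lam` call that leads
to `k2`. -/
def Separated (ℓ : ℕ) (k1 k2 : ℕ → ℕ) (st : Store m) (lam : ℕ) (c : ℕ → ℕ)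
    (v : Option (Dom m)) : Prop :=
  SplitAbove ℓ lam k1 k2 →
    (AgreeAbove ℓ lam c k1 → c lam ≤ k1 lam → ∃ y ∈ (st lam).getD ∅, v = some y) ∧
    (AgreeAbove ℓ lam c k2 → 0 < k2 lam → ∀ y ∈ (st lam).getD ∅, v ≠ some y)

theorem Separated.congr_idx {st : Store m} {lam : ℕ} {c c' : ℕ → ℕ} {v : Option (Dom m)}
    (h : Separated ℓ k1 k2 st lam c v) (hlam : lam ≤ ℓ) (hc : ∀ t, t ≤ ℓ → c' t = c t) :
    Separated ℓ k1 k2 st lam c' v := by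
  intro hs
  refine ⟨fun hk hle => (h hs).1 (hk.congr_left hc) ?_, fun hk => (h hs).2 (hk.congr_left hc)⟩
  rwa [← hc lam hlam]

theorem Separated.congr_store {st st' : Store m} {lam : ℕ} {c : ℕ → ℕ} {v : Option (Dom m)}
    (h : Separated ℓ k1 k2 st lam c v) (hst : st' lam = st lam) :
    Separated ℓ k1 k2 st' lam c v := by
  rwa [Separated, hst]

theorem separated_of_idx_lt (hlt : IdxLt ℓ k1 k2) (st : Store m) {lam i : ℕ} {c : ℕ → ℕ}
    (v : Option (Dom m)) (hlam : lam < i) (hiℓ : i ≤ ℓ) (hci : c i < k1 i)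
    (hc : AgreeAbove ℓ i c k1) : Separated ℓ k1 k2 st lam c v := by
  refine fun _ => ⟨fun hk => absurd (hk i hlam hiℓ) hci.ne, fun hk => ?_⟩
  have hlt' : IdxLt ℓ k2 k1 := ⟨i, by omega, hiℓ, hk i hlam hiℓ ▸ hci,
    fun t hit htℓ => (hk t (hlam.trans hit) htℓ).symm.trans (hc t hit htℓ)⟩
  exact absurd hlt' hlt.asymm

/-- The only iteration whose subcall changes the store is `j = k1 (i + 1)`, and the nodes of earlier
iterations then precede `k1`. -/
theorem Separated.of_later_call (hlt : IdxLt ℓ k1 k2) {st st₁ : Store m} {lam i j : ℕ}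
    {c kctx : ℕ → ℕ} {v : Option (Dom m)} (h : Separated ℓ k1 k2 st lam c v)
    (hlam : lam < i + 1) (hiℓ : i + 1 ≤ ℓ) (hcj : c (i + 1) < j)
    (hc : ∀ t, i + 1 < t → c t = kctx t)
    (hst : ¬ AgreeAbove ℓ i (truncIdx kctx (i + 1) j) k1 → st₁ = st) :
    Separated ℓ k1 k2 st₁ lam c v := by
  by_cases hk : AgreeAbove ℓ i (truncIdx kctx (i + 1) j) k1
  · obtain ⟨hj, hk_above⟩ := (agreeAbove_truncIdx hiℓ).1 hk
    exact separated_of_idx_lt hlt st₁ v hlam hiℓ (hj ▸ hcj)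
      fun t ht htℓ => (hc t ht).trans (hk_above t ht htℓ)
  · exact h.congr_store (by rw [hst hk])

/-- What a call of the relaxed walk at level `i` with index `c` guarantees about its output `w`,
its initial store `st` and its final store `st'`. -/
structure CallSpec (ℓ : ℕ) (g : ℕ → Dom m → Bool) (k1 k2 : ℕ → ℕ) (i : ℕ) (c : ℕ → ℕ)
    (st : Store m) (w : List (Node m n)) (st' : Store m) : Prop where
  level_le : ∀ z ∈ w.dropLast, nodeLevel ℓ g z ≤ i
  separated : ∀ p ∈ withIdx (nodeLevel ℓ g) c w.dropLast,
    Separated ℓ k1 k2 st' (nodeLevel ℓ g p.2) p.1 (p.2.tag (nodeLevel ℓ g p.2))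
  inactive_last : ∀ x ∈ w.getLast?, Inactive g i x
  store_eq : ¬ AgreeAbove ℓ i c k1 → st' = st

end Separation

/-! ### The loop of the relaxed walk -/

section RelaxedLoop

variable {a : Fin n → Fin m} {g : ℕ → Dom m → Bool} {r : ℕ → Dom m → Fin n} {ℓ : ℕ}
  {k1 k2 : ℕ → ℕ}

theorem freshStar_notMem (C : Finset (Dom m)) : (Sum.inr (freshStar C) : Dom m) ∉ C :=
  Nat.find_spec (freshStar_exists C)

/-- The store after a level-`i` call with index `c` has finished with recorded set `R`. -/
def closeStore (ℓ : ℕ) (k1 k2 : ℕ → ℕ) (i : ℕ) (c : ℕ → ℕ) (R : Finset (Dom m))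
    (st : Store m) : Store m :=
  if AgreeAbove ℓ i c k1 ∧ SplitAbove ℓ i k1 k2 then Function.update st i (some R) else st

theorem closeStore_of_ne {i t : ℕ} (c : ℕ → ℕ) (R : Finset (Dom m)) (st : Store m) (ht : t ≠ i) :
    closeStore ℓ k1 k2 i c R st t = st t := by
  unfold closeStore
  split_ifs
  · exact Function.update_of_ne ht _ _
  · rfl

theorem closeStore_of_not_agreeAbove {i : ℕ} {c : ℕ → ℕ} (R : Finset (Dom m)) (st : Store m)
    (hc : ¬ AgreeAbove ℓ i c k1) : closeStore ℓ k1 k2 i c R st = st :=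
  if_neg fun h => hc h.1

theorem closeStore_self {i : ℕ} {c : ℕ → ℕ} (R : Finset (Dom m)) (st : Store m)
    (hc : AgreeAbove ℓ i c k1) (hs : SplitAbove ℓ i k1 k2) :
    closeStore ℓ k1 k2 i c R st i = some R := by
  rw [closeStore, if_pos ⟨hc, hs⟩, Function.update_self]

theorem rloopF_succ_eq_some
    {subR : (ℕ → ℕ) → Store m → Fin n → Option (List (Node m n) × Store m)}
    {subU : Fin n → Option (Fin n)} {i : ℕ} {kctx : ℕ → ℕ} {fuel : ℕ} {C : Finset (Dom m)}
    {star : Bool} {sj : Fin n} {acc : List (Node m n)} {j : ℕ} {Crec : Finset (Dom m)}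
    {st : Store m} {w : List (Node m n)} {st' : Store m}
    (h : rloopF a g r ℓ k1 k2 subR subU i kctx (fuel + 1) C star sj acc j Crec st =
      some (w, st')) :
    ∃ subw st₁ x y star', subR (truncIdx kctx i j) st sj = some (subw, st₁) ∧
      subw.getLast? = some x ∧ y ∉ C ∧
      (g i y = true ∧
          rloopF a g r ℓ k1 k2 subR subU i kctx fuel (insert y C) star' (r i y)
            (acc ++ subw.dropLast ++ [x.setTag i y]) (j + 1)
            (if j + 1 ≤ k1 i then insert y C else Crec) st₁ = some (w, st') ∨
        g i y = false ∧ w = acc ++ subw.dropLast ++ [x.setTag i y] ∧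
          st' = closeStore ℓ k1 k2 i kctx Crec st₁) := by
  rw [rloopF] at h
  split at h
  · simp at h
  rename_i subw st₁ hsub
  split at h
  case h_2 => simp at h
  rename_i xv x _ hx
  extract_lets useBase y star' _ acc' at h
  have hyC : y ∉ C := by
    unfold y
    split_ifs with hbase
    · exact hbase.2
    · exact freshStar_notMem C
  refine ⟨subw, st₁, x, y, star', hsub, hx, hyC, ?_⟩
  by_cases hg : g i y = true
  · rw [if_pos hg] at h
    exact Or.inl ⟨hg, h⟩
  · rw [if_neg hg] at h
    obtain ⟨hw, hst⟩ := Prod.mk.inj (Option.some.inj h)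
    refine Or.inr ⟨by simpa using hg, hw.symm, hst.symm.trans ?_⟩
    unfold closeStore
    congr 1
    funext t
    simp only [Function.update_apply]

/-- The invariant of the loop of a level-`i` call with index `kctx`, initial set `C₀` and initial
store `st₀`. The arguments `C`, `Crec`, `st` and `acc` are the current values in the loop, and the
subcalls run so far are those of the iterations before `j`. -/
structure LoopInv (ℓ : ℕ) (g : ℕ → Dom m → Bool) (k1 k2 : ℕ → ℕ) (i : ℕ) (kctx : ℕ → ℕ)
    (C₀ : Finset (Dom m)) (st₀ : Store m) (C Crec : Finset (Dom m)) (j : ℕ) (st : Store m)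
    (acc : List (Node m n)) : Prop where
  level_le : ∀ z ∈ acc, nodeLevel ℓ g z ≤ i
  own : ∀ p ∈ withIdx (nodeLevel ℓ g) kctx acc, nodeLevel ℓ g p.2 = i →
    ∃ y ∈ C, p.2.tag i = some y ∧ y ∉ C₀ ∧ (p.1 i ≤ k1 i → y ∈ Crec)
  below : ∀ p ∈ withIdx (nodeLevel ℓ g) kctx acc, nodeLevel ℓ g p.2 < i →
    p.1 i < j ∧ Separated ℓ k1 k2 st (nodeLevel ℓ g p.2) p.1 (p.2.tag (nodeLevel ℓ g p.2))
  subset : C₀ ⊆ C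
  store_eq : ¬ AgreeAbove ℓ i kctx k1 → st = st₀

variable {i : ℕ} {kctx : ℕ → ℕ} {C₀ C Crec : Finset (Dom m)} {st₀ st : Store m}
  {acc : List (Node m n)} {j : ℕ}

theorem loopInv_nil (i : ℕ) (kctx : ℕ → ℕ) (C₀ : Finset (Dom m)) (st₀ : Store m) :
    LoopInv (n := n) ℓ g k1 k2 i kctx C₀ st₀ C₀ C₀ 0 st₀ [] where
  level_le := by simp
  own := by simp [withIdx]
  below := by simp [withIdx]
  subset := subset_rfl
  store_eq _ := rfl

theorem LoopInv.append_call (hlt : IdxLt ℓ k1 k2) (hi : i + 1 ≤ ℓ)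
    (inv : LoopInv ℓ g k1 k2 (i + 1) kctx C₀ st₀ C Crec j st acc)
    (hidx : idxAfter (nodeLevel ℓ g) kctx acc = truncIdx kctx (i + 1) j)
    {w : List (Node m n)} {st₁ : Store m}
    (spec : CallSpec ℓ g k1 k2 i (truncIdx kctx (i + 1) j) st w st₁) :
    LoopInv ℓ g k1 k2 (i + 1) kctx C₀ st₀ C Crec (j + 1) st₁ (acc ++ w.dropLast) where
  level_le z hz := (List.mem_append.1 hz).elim (inv.level_le z)
    fun hz => (spec.level_le z hz).trans i.le_succ
  own p hp hlev := by
    rw [withIdx_append, hidx] at hp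
    rcases List.mem_append.1 hp with hp | hp
    · exact inv.own p hp hlev
    · have := spec.level_le p.2 (snd_mem_of_mem_withIdx hp)
      omega
  below p hp hlev := by
    rw [withIdx_append, hidx] at hp
    rcases List.mem_append.1 hp with hp | hp
    · obtain ⟨hpj, hsep⟩ := inv.below p hp hlev
      exact ⟨hpj.trans j.lt_succ_self, hsep.of_later_call hlt hlev hi hpj
        (fun t ht => fst_apply_of_mem_withIdx hp inv.level_le ht) spec.store_eq⟩
    · refine ⟨?_, spec.separated p hp⟩
      rw [fst_apply_of_mem_withIdx hp spec.level_le i.lt_succ_self, truncIdx_self]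
      exact j.lt_succ_self
  subset := inv.subset
  store_eq hk := (spec.store_eq fun h => hk ((agreeAbove_truncIdx hi).1 h).2).trans
    (inv.store_eq hk)

theorem LoopInv.concat (inv : LoopInv ℓ g k1 k2 i kctx C₀ st₀ C Crec j st acc) {x : Node m n}
    {y : Dom m} (hx : nodeLevel ℓ g x = i) (hxy : x.tag i = some y) (hy : y ∉ C)
    (hidx : idxAfter (nodeLevel ℓ g) kctx (acc ++ [x]) i = j) :
    LoopInv ℓ g k1 k2 i kctx C₀ st₀ (insert y C) (if j ≤ k1 i then insert y C else Crec) j st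
      (acc ++ [x]) where
  level_le z hz := by
    rcases List.mem_append.1 hz with hz | hz
    · exact inv.level_le z hz
    · exact (List.mem_singleton.1 hz ▸ hx).le
  own p hp hlev := by
    rw [withIdx_append] at hp
    rcases List.mem_append.1 hp with hp | hp
    · obtain ⟨y', hy'C, htag, hy'C₀, hrec⟩ := inv.own p hp hlev
      refine ⟨y', Finset.mem_insert_of_mem hy'C, htag, hy'C₀, fun hle => ?_⟩
      split_ifs
      · exact Finset.mem_insert_of_mem hy'C
      · exact hrec hle
    · obtain rfl := List.mem_singleton.1 hp
      refine ⟨y, Finset.mem_insert_self y C, hxy, fun h => hy (inv.subset h), fun hle => ?_⟩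
      simp only [← idxAfter_append, hidx] at hle
      rw [if_pos hle]
      exact Finset.mem_insert_self y C
  below p hp hlev := by
    rw [withIdx_append] at hp
    rcases List.mem_append.1 hp with hp | hp
    · exact inv.below p hp hlev
    · obtain rfl := List.mem_singleton.1 hp
      exact absurd hx hlev.ne
  subset := inv.subset.trans (Finset.subset_insert y C)
  store_eq := inv.store_eq

theorem LoopInv.separated_own (inv : LoopInv ℓ g k1 k2 i kctx C₀ st₀ C Crec j st acc)
    (hC₀ : AgreeAbove ℓ i kctx k2 → SplitAbove ℓ i k1 k2 → 0 < k2 i → C₀ = (st₀ i).getD ∅)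
    {p : (ℕ → ℕ) × Node m n} (hp : p ∈ withIdx (nodeLevel ℓ g) kctx acc)
    (hlev : nodeLevel ℓ g p.2 = i) :
    Separated ℓ k1 k2 (closeStore ℓ k1 k2 i kctx Crec st) i p.1 (p.2.tag i) := by
  obtain ⟨y, -, htag, hyC₀, hrec⟩ := inv.own p hp hlev
  have hctx {k : ℕ → ℕ} (hk : AgreeAbove ℓ i p.1 k) : AgreeAbove ℓ i kctx k := fun t ht htℓ =>
    (fst_apply_of_mem_withIdx hp inv.level_le ht).symm.trans (hk t ht htℓ)
  refine fun hs => ⟨fun hk hle => ⟨y, ?_, htag⟩, fun hk hpos y' hy' htag' => ?_⟩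
  · rw [closeStore_self Crec st (hctx hk) hs]
    exact hrec hle
  · have hk1 := hs.not_agreeAbove (hctx hk)
    rw [closeStore_of_not_agreeAbove Crec st hk1, inv.store_eq hk1, ← hC₀ (hctx hk) hs hpos] at hy'
    obtain rfl : y = y' := Option.some.inj (htag.symm.trans htag')
    exact hyC₀ hy'

theorem LoopInv.callSpec (inv : LoopInv ℓ g k1 k2 i kctx C₀ st₀ C Crec j st acc)
    (hC₀ : AgreeAbove ℓ i kctx k2 → SplitAbove ℓ i k1 k2 → 0 < k2 i → C₀ = (st₀ i).getD ∅)
    {x : Node m n} (hx : Inactive g i x) :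
    CallSpec ℓ g k1 k2 i kctx st₀ (acc ++ [x]) (closeStore ℓ k1 k2 i kctx Crec st) where
  level_le := by simpa only [List.dropLast_concat] using inv.level_le
  separated := by
    rw [List.dropLast_concat]
    intro p hp
    rcases (inv.level_le p.2 (snd_mem_of_mem_withIdx hp)).eq_or_lt with hlev | hlev
    · rw [hlev]
      exact inv.separated_own hC₀ hp hlev
    · exact (inv.below p hp hlev).2.congr_store (closeStore_of_ne kctx Crec st hlev.ne)
  inactive_last x' hx' := by
    rw [List.getLast?_concat, Option.mem_some_iff] at hx'
    exact hx' ▸ hx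
  store_eq hk := (closeStore_of_not_agreeAbove Crec st hk).trans (inv.store_eq hk)

theorem LoopInv.callSpec_of_rloopF (hlt : IdxLt ℓ k1 k2) (hi : i + 1 ≤ ℓ)
    {subR : (ℕ → ℕ) → Store m → Fin n → Option (List (Node m n) × Store m)}
    (hsub : ∀ c st s w st', (∀ t, t ≤ i → c t = 0) → subR c st s = some (w, st') →
      CallSpec ℓ g k1 k2 i c st w st')
    (hC₀ : AgreeAbove ℓ (i + 1) kctx k2 → SplitAbove ℓ (i + 1) k1 k2 → 0 < k2 (i + 1) →
      C₀ = (st₀ (i + 1)).getD ∅)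
    {subU : Fin n → Option (Fin n)} {fuel : ℕ} {star : Bool} {sj : Fin n}
    (inv : LoopInv ℓ g k1 k2 (i + 1) kctx C₀ st₀ C Crec j st acc)
    (hidx : idxAfter (nodeLevel ℓ g) kctx acc = truncIdx kctx (i + 1) j)
    {w : List (Node m n)} {st' : Store m}
    (hrun : rloopF a g r ℓ k1 k2 subR subU (i + 1) kctx fuel C star sj acc j Crec st =
      some (w, st')) :
    CallSpec ℓ g k1 k2 (i + 1) kctx st₀ w st' := by
  induction fuel generalizing C star sj acc j Crec st with
  | zero => simp [rloopF] at hrun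
  | succ fuel ih =>
    obtain ⟨subw, st₁, x, y, star', hcall, hx, hyC, hnext⟩ := rloopF_succ_eq_some hrun
    have spec : CallSpec ℓ g k1 k2 i (truncIdx kctx (i + 1) j) st subw st₁ :=
      hsub _ _ _ _ _ (fun t ht => truncIdx_of_lt kctx j (Nat.lt_succ_of_le ht)) hcall
    have inv' := inv.append_call hlt hi hidx spec
    have hx' : Inactive g i (x.setTag (i + 1) y) := (spec.inactive_last x hx).setTag_succ y
    have htag := x.setTag_tag_self (i + 1) y
    rcases hnext with ⟨hg, hrun⟩ | ⟨hg, rfl, rfl⟩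
    · have hlev := nodeLevel_eq hx' hi htag hg
      have hidx' := idxAfter_append_concat hidx spec.level_le hlev
      exact ih (inv'.concat hlev htag hyC (by rw [hidx', truncIdx_self])) hidx' hrun
    · exact inv'.callSpec hC₀ (hx'.succ htag hg)

theorem callSpec_of_rwalkF (hlt : IdxLt ℓ k1 k2) {i : ℕ} (hi : i ≤ ℓ) {fuel : ℕ} {c : ℕ → ℕ}
    {st : Store m} {s : Fin n} {w : List (Node m n)} {st' : Store m}
    (hc : ∀ t, t ≤ i → c t = 0) (h : rwalkF a g r ℓ k1 k2 fuel i c st s = some (w, st')) :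
    CallSpec ℓ g k1 k2 i c st w st' := by
  induction i generalizing fuel c st s w st' with
  | zero =>
    rw [rwalkF] at h
    obtain ⟨rfl, rfl⟩ := Prod.mk.inj (Option.some.inj h)
    exact ⟨by simp, by simp [withIdx], fun _ _ t ht ht' => by omega, fun _ => rfl⟩
  | succ i ih =>
    cases fuel with
    | zero => simp [rwalkF] at h
    | succ fuel =>
      rw [rwalkF] at h
      exact (loopInv_nil (i + 1) c _ st).callSpec_of_rloopF hlt hi
        (fun _ _ _ _ _ hc h => ih (i.le_succ.trans hi) hc h)
        (fun hk hs hpos => if_pos ⟨hk, hs, hpos⟩) (truncIdx_zero_eq hc).symm h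

theorem callSpec_of_extRWalk (hlt : IdxLt ℓ k1 k2) {s : Fin n} {w : List (Node m n)}
    (hw : extRWalk a g r ℓ k1 k2 s = some w) :
    ∃ st', CallSpec ℓ g k1 k2 ℓ (fun _ => 0) (fun _ => none) w st' := by
  unfold extRWalk at hw
  split_ifs at hw
  obtain ⟨⟨w, st'⟩, hrun, rfl⟩ := Option.map_eq_some_iff.1 hw
  exact ⟨st', callSpec_of_rwalkF hlt le_rfl (fun _ _ => rfl) hrun⟩

end RelaxedLoop

/-! ### Positions of the relaxed walk -/

section Positions

variable {ℓ : ℕ} {g : ℕ → Dom m → Bool} {k1 k2 : ℕ → ℕ} {st st' : Store m}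
  {w : List (Node m n)} {μ : ℕ}

theorem onPath_levelOf_zero (ℓ : ℕ) (g : ℕ → Dom m → Bool) (w : List (Node m n)) (μ : ℕ) :
    OnPath (levelOf ℓ g w) 0 μ :=
  ⟨Nat.zero_le μ, fun ρ _ _ => levelOf_zero ℓ g w ▸ levelOf_le ℓ g w ρ⟩

theorem CallSpec.levelOf_le (spec : CallSpec ℓ g k1 k2 ℓ (fun _ => 0) st w st') (hμ : 0 < μ)
    (hμw : μ < w.length) : levelOf ℓ g w μ ≤ ℓ := by
  obtain ⟨p, rfl⟩ := Nat.exists_eq_add_one_of_ne_zero hμ.ne'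
  have hp : p < w.dropLast.length := by rw [List.length_dropLast]; omega
  rw [levelOf_succ (p.lt_succ_self.trans hμw), ← List.getElem_dropLast hp]
  exact spec.level_le _ (List.getElem_mem hp)

theorem CallSpec.lt_length_of_hasIdx (spec : CallSpec ℓ g k1 k2 ℓ (fun _ => 0) st w st')
    {k k' : ℕ → ℕ} (hlt : IdxLt ℓ k k') (hμ : HasIdx ℓ (levelOf ℓ g w) w.length μ k') :
    μ < w.length := by
  refine lt_of_le_of_ne hμ.1 ?_
  rintro rfl
  obtain ⟨i, hi, hiℓ, hik, -⟩ := hlt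
  have hzero : idxAt (levelOf ℓ g w) w.length i = 0 :=
    idxAt_eq_zero (by rw [levelOf_length spec.inactive_last]; omega)
  rw [hμ.2 i hi hiℓ] at hzero
  omega

theorem CallSpec.separated_aAt (spec : CallSpec ℓ g k1 k2 ℓ (fun _ => 0) st w st') (hμ : 0 < μ)
    (hμw : μ < w.length) :
    Separated ℓ k1 k2 st' (levelOf ℓ g w μ) (idxAt (levelOf ℓ g w) μ) (aAt ℓ g w μ) := by
  have hle := spec.levelOf_le hμ hμw
  obtain ⟨p, rfl⟩ := Nat.exists_eq_add_one_of_ne_zero hμ.ne'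
  have hp : p < w.length := p.lt_succ_self.trans hμw
  have hmem : (idxAfter (nodeLevel ℓ g) (fun _ => 0) (w.take (p + 1)), w[p]) ∈
      withIdx (nodeLevel ℓ g) (fun _ => 0) w.dropLast := by
    have hp' : p < w.dropLast.length := by rw [List.length_dropLast]; omega
    have htake : w.dropLast.take p = w.take p := by
      rw [List.dropLast_eq_take, List.take_take, min_eq_left (by omega)]
    refine mem_withIdx.2 ⟨w.dropLast.take p, w.dropLast.drop (p + 1), ?_, ?_⟩
    · rw [← List.getElem_dropLast hp', List.getElem_cons_drop, List.take_append_drop]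
    · rw [htake, List.take_append_getElem hp]
  refine Separated.congr_idx ?_ hle fun t ht => idxAt_levelOf_eq_idxAfter hp ht
  rw [aAt, tagAt_succ hp, levelOf_succ hp]
  exact spec.separated _ hmem

theorem CallSpec.onPath_of_agreeAbove (spec : CallSpec ℓ g k1 k2 ℓ (fun _ => 0) st w st')
    {ν : ℕ} (hν : ν < w.length) (hμ : μ < w.length)
    (heq : AgreeAbove ℓ (levelOf ℓ g w ν) (idxAt (levelOf ℓ g w) ν) (idxAt (levelOf ℓ g w) μ))
    (hle : idxAt (levelOf ℓ g w) ν (levelOf ℓ g w ν) ≤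
      idxAt (levelOf ℓ g w) μ (levelOf ℓ g w ν)) :
    OnPath (levelOf ℓ g w) ν μ := by
  refine onPath_of_idxAt (fun t ht => ?_) hle
  by_cases htℓ : t ≤ ℓ
  · exact heq t ht htℓ
  · have hroot {ρ : ℕ} (hρ : ρ < w.length) :
        idxAt (levelOf ℓ g w) ρ t = idxAt (levelOf ℓ g w) 0 t :=
      idxAt_eq_of_forall_lt ρ.zero_le fun σ hσ hσρ =>
        (spec.levelOf_le hσ (hσρ.trans_lt hρ)).trans_lt (not_le.1 htℓ)
    rw [hroot hν, hroot hμ]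

theorem HasIdx.agreeAbove_and_le {lvl : ℕ → ℕ} {len ν : ℕ} {k : ℕ → ℕ}
    (hμ : HasIdx ℓ lvl len μ k) (hν : OnPath lvl ν μ) (hpos : 1 ≤ lvl ν) (hle : lvl ν ≤ ℓ) :
    AgreeAbove ℓ (lvl ν) (idxAt lvl ν) k ∧ idxAt lvl ν (lvl ν) ≤ k (lvl ν) :=
  ⟨fun t ht htℓ => (hν.idxAt_eq ht).trans (hμ.2 t (hpos.trans ht.le) htℓ),
    hμ.2 (lvl ν) hpos hle ▸ hν.idxAt_level_le⟩

end Positions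

/-- Lemma 6.2: in the relaxed extended walk there is never a collision
between the paths `p(μ^{k¹})` and `p(μ^{k²})`. -/
theorem statement_14 (ℓ m n : ℕ) (hℓ : 0 < ℓ) (hm : 0 < m) (hn : 0 < n)
    (a : Fin n → Fin m) (k1 k2 : ℕ → ℕ) (hlt : IdxLt ℓ k1 k2)
    (g : ℕ → Dom m → Bool) (r : ℕ → Dom m → Fin n) (s : Fin n)
    (w : List (Node m n)) (hw : extRWalk a g r ℓ k1 k2 s = some w)
    (μ₁ μ₂ : ℕ) (hμ₁ : HasIdx ℓ (levelOf ℓ g w) w.length μ₁ k1)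
    (hμ₂ : HasIdx ℓ (levelOf ℓ g w) w.length μ₂ k2) :
    ¬ Collision (levelOf ℓ g w) (aAt ℓ g w) μ₁ μ₂ := by
  obtain ⟨st', spec⟩ := callSpec_of_extRWalk hlt hw
  rintro ⟨α, β, hα₁, hα₂, hβ₂, hβ₁, hlvl, hval⟩
  have hα0 : 0 < α := Nat.pos_of_ne_zero fun h => hα₂ (h ▸ onPath_levelOf_zero ℓ g w μ₂)
  have hβ0 : 0 < β := Nat.pos_of_ne_zero fun h => hβ₁ (h ▸ onPath_levelOf_zero ℓ g w μ₁)
  have hμ₂w : μ₂ < w.length := spec.lt_length_of_hasIdx hlt hμ₂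
  have hβw : β < w.length := hβ₂.1.trans_lt hμ₂w
  have hβℓ : levelOf ℓ g w β ≤ ℓ := spec.levelOf_le hβ0 hβw
  have hαℓ : levelOf ℓ g w α ≤ ℓ := hlvl ▸ hβℓ
  have hαw : α < w.length := lt_of_le_of_ne (hα₁.1.trans hμ₁.1) fun h => by
    rw [h, levelOf_length spec.inactive_last] at hαℓ
    omega
  obtain ⟨hα_above, hα_le⟩ := hμ₁.agreeAbove_and_le hα₁ (levelOf_pos ℓ g w α) hαℓ
  obtain ⟨hβ_above, hβ_le⟩ := hμ₂.agreeAbove_and_le hβ₂ (levelOf_pos ℓ g w β) hβℓ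
  by_cases hs : SplitAbove ℓ (levelOf ℓ g w α) k1 k2
  · obtain ⟨y, hy, hαy⟩ := (spec.separated_aAt hα0 hαw hs).1 hα_above hα_le
    exact (spec.separated_aAt hβ0 hβw (hlvl ▸ hs)).2 hβ_above
      ((idxAt_level_pos _ β).trans_le hβ_le) y (hlvl ▸ hy) (hval ▸ hαy)
  · obtain ⟨hk, hk_le⟩ := hlt.agreeAbove_and_le hαℓ hs
    have hidx₂ : ∀ t, levelOf ℓ g w α ≤ t → t ≤ ℓ → idxAt (levelOf ℓ g w) μ₂ t = k2 t :=
      fun t ht => hμ₂.2 t ((levelOf_pos ℓ g w α).trans ht)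
    refine hα₂ (spec.onPath_of_agreeAbove hαw hμ₂w (fun t ht htℓ => ?_) ?_)
    · rw [hα_above t ht htℓ, hk t ht htℓ, hidx₂ t ht.le htℓ]
    · rw [hidx₂ _ le_rfl hαℓ]
      exact hα_le.trans hk_le

end EDW
end
end
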